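/- Let $X$ be a projective K3 surface over an algebraically closed field $k$, and let $c_X\in \mathrm{CH}^2(X)$ be its Beauville–Voisin class, i.e. the class of a closed point which is represented by every closed point lying on a rational curve in $X$. Here a curve $C\subset X$ is a non-empty closed subscheme all of whose irreducible components have dimension one; its integral components are its irreducible components with their reduced structure, and $C$ is rational if the normalization of each integral component is isomorphic to $\mathbb{P}^1_k$. For an integral curve $W\subset X$ with generic point $\eta_W$, let $\kappa_W\in \mathrm{CH}^2(X\times_k k(\eta_W))$ be the class of the restriction of the cycle $\Delta_W-\{x_0\}\times W$ on $X\times W$ to the generic fibre of $X\times W\to W$, where $\Delta_W$ is the graph of the inclusion $W\subset X$ and $x_0\in X$ is any closed point with $[x_0]=c_X$. A curve $C\subset X$ is a constant cycle curve if $\kappa_W$ is torsion for every integral component $W$ of $C$, and its order is then the maximum of the orders of these classes $\kappa_W$. Every rational curve $C\subset X$ is a constant cycle curve of order one (for every choice of $x_0$). -/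

import Mathlib

universe u

open CategoryTheory CategoryTheory.Limits AlgebraicGeometry

namespace K3CCC

noncomputable section

/-! ### Projective space -/

attribute [local instance] MvPolynomial.gradedAlgebra

/-- Projective `n`-space `ℙⁿ_k = Proj k[x₀, …, xₙ]`. -/
def projSpace (n : ℕ) (k : Type u) [Field k] : Scheme.{u} :=
  Proj (MvPolynomial.homogeneousSubmodule (Fin (n + 1)) k)

/-- The structure morphism `ℙⁿ_k ⟶ Spec k`. -/
def projSpaceStr (n : ℕ) (k : Type u) [Field k] : projSpace n k ⟶ Spec (.of k) :=
  Proj.toSpecZero (MvPolynomial.homogeneousSubmodule (Fin (n + 1)) k) ≫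
    Spec.map (CommRingCat.ofHom (algebraMap k
      (MvPolynomial.homogeneousSubmodule (Fin (n + 1)) k 0)))

/-! ### K3 surfaces -/

/-- For a tower `k → A → B` of commutative rings, the natural map
`⋀²_A Ω_{A/k} → ⋀²_B Ω_{B/k}`, `a · dx ∧ dy ↦ a · dx ∧ dy`. -/
def twoFormMap (k A B : Type u) [CommRing k] [CommRing A] [CommRing B] [Algebra k A]
    [Algebra k B] [Algebra A B] [IsScalarTower k A B] :
    (⋀[A]^2 (Ω[A⁄k])) →ₗ[A] (⋀[B]^2 (Ω[B⁄k])) :=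
  exteriorPower.alternatingMapLinearEquiv
    { ((exteriorPower.ιMulti B 2 (M := Ω[B⁄k])).toMultilinearMap.restrictScalars A).compLinearMap
        (fun _ => KaehlerDifferential.map k k A B) with
      map_eq_zero_of_eq' := fun _ _ _ hv hij =>
        (exteriorPower.ιMulti B 2 (M := Ω[B⁄k])).map_eq_zero_of_eq _
          (congrArg (KaehlerDifferential.map k k A B) hv) hij }

variable {k : Type u} [Field k] {X : Scheme.{u}}

/-- The ring homomorphism `k → Γ(X, U)` of a `k`-scheme `X`. -/
def scalars (f : X ⟶ Spec (.of k)) (U : X.Opens) : k →+* Γ(X, U) :=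
  ((Scheme.ΓSpecIso (.of k)).inv ≫ f.appLE ⊤ U (by rw [Scheme.Hom.preimage_top]; exact le_top)).hom

lemma scalars_comp (f : X ⟶ Spec (.of k)) {U V : X.Opens} (h : V ≤ U) :
    scalars f V = (X.presheaf.map (homOfLE h).op).hom.comp (scalars f U) := by
  unfold scalars
  rw [← Scheme.Hom.appLE_map f (U := ⊤) (V := U) (by rw [Scheme.Hom.preimage_top]; exact le_top)
    (homOfLE h).op]
  rfl

/-- The ring `Γ(X, U)`, regarded as a `k`-algebra through `f : X ⟶ Spec k`. -/
def Sections (_f : X ⟶ Spec (.of k)) (U : X.Opens) : Type u := Γ(X, U)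

instance (f : X ⟶ Spec (.of k)) (U : X.Opens) : CommRing (Sections f U) :=
  inferInstanceAs (CommRing Γ(X, U))

instance (f : X ⟶ Spec (.of k)) (U : X.Opens) : Algebra k (Sections f U) :=
  RingHom.toAlgebra (S := Sections f U) (scalars f U)

/-- The restriction homomorphism `Γ(X, U) → Γ(X, V)` for `V ⊆ U`. -/
def Sections.res (f : X ⟶ Spec (.of k)) {U V : X.Opens} (h : V ≤ U) :
    Sections f U →+* Sections f V :=
  (X.presheaf.map (homOfLE h).op).hom

/-- The module of `2`-forms `⋀² Ω_{Γ(X, U)/k}`; for `U` affine these are the sections over `U`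
of the sheaf `⋀² Ω_{X/k}`. -/
abbrev TwoForms (f : X ⟶ Spec (.of k)) (U : X.Opens) : Type u :=
  ↥(⋀[Sections f U]^2 (Ω[Sections f U⁄k]))

/-- Restriction of `2`-forms from `U` to `V ⊆ U`. -/
def TwoForms.res (f : X ⟶ Spec (.of k)) {U V : X.Opens} (h : V ≤ U) (s : TwoForms f U) :
    TwoForms f V :=
  letI : Algebra (Sections f U) (Sections f V) := (Sections.res f h).toAlgebra
  haveI : IsScalarTower k (Sections f U) (Sections f V) :=
    .of_algebraMap_eq' (scalars_comp f h)
  twoFormMap k (Sections f U) (Sections f V) s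

/-- Triviality of the canonical bundle `ω_X = ⋀² Ω_{X/k}` of a smooth surface: there is a global
`2`-form (a compatible family of `2`-forms on the affine opens) which is a basis of the
`2`-forms on every affine open, i.e. which defines an isomorphism `𝒪_X ≅ ω_X`. -/
def TrivialCanonicalBundle (f : X ⟶ Spec (.of k)) : Prop :=
  ∃ s : ∀ U : X.affineOpens, TwoForms f U.1,
    (∀ (U V : X.affineOpens) (h : V.1 ≤ U.1), TwoForms.res f h (s U) = s V) ∧
    ∀ U : X.affineOpens, Function.Bijective fun a : Sections f U.1 => a • s U

/-- The structure sheaf of `X` as a sheaf of abelian groups on the Zariski site of `X`. -/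
def structureSheafAb (X : Scheme.{u}) :
    Sheaf (Opens.grothendieckTopology X) AddCommGrpCat.{u} :=
  (sheafCompose _ (forget₂ CommRingCat.{u} RingCat.{u} ⋙ forget₂ RingCat.{u} AddCommGrpCat.{u})).obj
    X.sheaf

/-- A projective K3 surface over a field `k`: an integral smooth projective surface `X` over `k`
with trivial canonical bundle and `H¹(X, 𝒪_X) = 0`. -/
class IsProjectiveK3 (f : X ⟶ Spec (.of k)) : Prop where
  isIntegral : IsIntegral X
  smooth : SmoothOfRelativeDimension 2 f
  projective : ∃ (n : ℕ) (i : X ⟶ projSpace n k), IsClosedImmersion i ∧ i ≫ projSpaceStr n k = f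
  trivialCanonicalBundle : TrivialCanonicalBundle f
  h1_eq_zero : Subsingleton ((structureSheafAb X).H 1)

instance (n : ℕ) (k : Type u) [Field k] : IsSeparated (projSpaceStr n k) := by
  have : IsSeparated (Proj.toSpecZero (MvPolynomial.homogeneousSubmodule (Fin (n + 1)) k)) :=
    Proj.isSeparated _
  exact MorphismProperty.comp_mem _ _ _ this inferInstance

instance (f : X ⟶ Spec (.of k)) [hf : IsProjectiveK3 f] : IsSeparated f := by
  obtain ⟨n, i, hi, rfl⟩ := hf.projective
  infer_instance

instance (f : X ⟶ Spec (.of k)) [hf : IsProjectiveK3 f] : LocallyOfFiniteType f := by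
  have := hf.smooth
  have : Smooth f := SmoothOfRelativeDimension.smooth 2 f
  infer_instance

/-! ### The Chow group of zero-cycles

For a surface `Y` the codimension two cycles are the zero-cycles, and `CH²(Y) = CH₀(Y)`. -/

/-- Zero-cycles on `Y`: the free abelian group on the closed points of `Y`. -/
abbrev ZeroCycle (Y : Scheme.{u}) : Type u := closedPoints Y →₀ ℤ

/-- The image of a closed point under a finite morphism. -/
def mapClosedPoint {T Y : Scheme.{u}} (g : T ⟶ Y) [IsFinite g] (t : closedPoints T) :
    closedPoints Y :=
  ⟨g t.1, by
    have h := g.isClosedMap _ (mem_closedPoints_iff.1 t.2)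
    rw [Set.image_singleton] at h
    exact mem_closedPoints_iff.2 h⟩

/-- Push-forward of zero-cycles along a finite morphism, `g_*[t] = [κ(t) : κ(g t)] · [g t]`. -/
def ZeroCycle.pushforward {T Y : Scheme.{u}} (g : T ⟶ Y) [IsFinite g] :
    ZeroCycle T →+ ZeroCycle Y :=
  Finsupp.liftAddHom fun t =>
    g.residueDegree t.1 • Finsupp.singleAddHom (mapClosedPoint g t)

/-- `D` is the divisor `div φ = ∑ ord_t(φ) · [t]` of the rational function `φ` on the integral
curve `T`. -/
def IsDivisorOf {T : Scheme.{u}} [IsIntegral T] [IsLocallyNoetherian T]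
    (D : ZeroCycle T) (φ : T.functionField) : Prop :=
  ∀ t : closedPoints T, D t = Scheme.ord φ t.1

/-- The subgroup of zero-cycles on `Y` that are rationally equivalent to zero: it is generated by
the cycles `g_*(div φ)` for integral curves `T`, finite morphisms `g : T ⟶ Y` (such as the inclusion
of an integral closed curve in `Y`, or its normalization) and rational functions `φ ≠ 0` on `T`. -/
def ratEquivZero (Y : Scheme.{u}) : AddSubgroup (ZeroCycle Y) :=
  AddSubgroup.closure
    {c | ∃ (T : Scheme.{u}) (_ : IsIntegral T) (_ : IsLocallyNoetherian T)
        (g : T ⟶ Y) (_ : IsFinite g) (φ : T.functionField) (D : ZeroCycle T),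
        topologicalKrullDim T = 1 ∧ φ ≠ 0 ∧ IsDivisorOf D φ ∧ c = ZeroCycle.pushforward g D}

/-- The Chow group `CH₀(Y)` of zero-cycles modulo rational equivalence; it is `CH²(Y)` for
a surface `Y`. -/
abbrev CH₀ (Y : Scheme.{u}) : Type u := ZeroCycle Y ⧸ ratEquivZero Y

/-- The class `[y] ∈ CH₀(Y)` of a closed point. -/
def CH₀.cls {Y : Scheme.{u}} (y : closedPoints Y) : CH₀ Y :=
  QuotientAddGroup.mk (Finsupp.single y 1)

/-! ### Curves, rational curves, the Beauville–Voisin class -/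

/-- `i : C ⟶ X` is (the inclusion of) a curve: a nonempty closed subscheme all of whose irreducible
components have dimension one. -/
structure IsCurve {C : Scheme.{u}} (i : C ⟶ X) : Prop where
  isClosedImmersion : IsClosedImmersion i
  nonempty : Nonempty C
  dim_eq_one : ∀ Z ∈ irreducibleComponents C, topologicalKrullDim Z = 1

/-- `j : W ⟶ C` is (the inclusion of) an integral component of `C`: an irreducible component with
its reduced scheme structure. -/
structure IsIntegralComponent {W C : Scheme.{u}} (j : W ⟶ C) : Prop where
  isIntegral : IsIntegral W
  isClosedImmersion : IsClosedImmersion j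
  range_mem : Set.range j ∈ irreducibleComponents C

/-- The inclusion `Spec k(η_W) ⟶ W` of the generic point of an integral scheme `W`. -/
def genericPointInclusion (W : Scheme.{u}) [IsIntegral W] : Spec W.functionField ⟶ W :=
  W.fromSpecStalk (genericPoint W)

/-- The normalization of the integral `k`-scheme `p : W ⟶ Spec k`, i.e. the normalization of `W`
in its generic point, is isomorphic over `k` to the projective line. -/
def HasNormalizationP1 {W : Scheme.{u}} [IsIntegral W] (p : W ⟶ Spec (.of k))
    [QuasiSeparated p] : Prop :=
  haveI : QuasiSeparatedSpace W := (quasiSeparated_iff_quasiSeparatedSpace p).1 inferInstance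
  haveI : QuasiCompact (genericPointInclusion W) := inferInstance
  haveI : QuasiSeparated (genericPointInclusion W) := inferInstance
  ∃ e : (genericPointInclusion W).normalization ≅ projSpace 1 k,
    e.hom ≫ projSpaceStr 1 k = (genericPointInclusion W).fromNormalization ≫ p

/-- `i : C ⟶ X` is a rational curve in the `k`-scheme `f : X ⟶ Spec k`: a curve such that the
normalization of every integral component is a projective line. -/
structure IsRationalCurve (f : X ⟶ Spec (.of k)) [IsSeparated f] {C : Scheme.{u}} (i : C ⟶ X) :
    Prop where
  isCurve : IsCurve i
  normalization : ∀ (W : Scheme.{u}) (j : W ⟶ C) (hj : IsIntegralComponent j),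
    haveI := hj.isIntegral
    haveI := hj.isClosedImmersion
    haveI := isCurve.isClosedImmersion
    HasNormalizationP1 (j ≫ i ≫ f)

/-- `c ∈ CH₀(X) = CH²(X)` is the Beauville–Voisin class: the class of a closed point which is
represented by every closed point lying on a rational curve in `X`. -/
structure IsBeauvilleVoisinClass (f : X ⟶ Spec (.of k)) [IsSeparated f] (c : CH₀ X) : Prop where
  exists_point : ∃ x : closedPoints X, CH₀.cls x = c
  eq_of_rational : ∀ (C : Scheme.{u}) (i : C ⟶ X), IsRationalCurve f i →
    ∀ x : closedPoints X, x.1 ∈ Set.range i → CH₀.cls x = c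

/-- The Beauville–Voisin class is unique as soon as `X` contains a rational curve. -/
lemma IsBeauvilleVoisinClass.unique {f : X ⟶ Spec (.of k)} [IsSeparated f]
    [LocallyOfFiniteType f] {C : Scheme.{u}} {i : C ⟶ X} (h : IsRationalCurve f i) {c c' : CH₀ X}
    (hc : IsBeauvilleVoisinClass f c) (hc' : IsBeauvilleVoisinClass f c') : c = c' := by
  have := h.isCurve.nonempty
  have := h.isCurve.isClosedImmersion
  have : LocallyOfFiniteType (i ≫ f) := inferInstance
  have : JacobsonSpace C := LocallyOfFiniteType.jacobsonSpace (i ≫ f)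
  obtain ⟨y, -, hy⟩ := nonempty_inter_closedPoints (X := C) (Z := Set.univ) Set.univ_nonempty
    isOpen_univ.isLocallyClosed
  have hy' : IsClosed {i y} := by
    have := i.isClosedEmbedding.isClosedMap _ (mem_closedPoints_iff.1 hy)
    simpa using this
  rw [← hc.eq_of_rational C i h ⟨i y, hy'⟩ ⟨y, rfl⟩,
    ← hc'.eq_of_rational C i h ⟨i y, hy'⟩ ⟨y, rfl⟩]

/-! ### The class `κ_C` and constant cycle curves -/

/-- The closed point of a separated scheme `Y` over (the spectrum of a field) `S` given by
a section of `Y ⟶ S`. -/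
def closedPointOfSection {Y S : Scheme.{u}} [Subsingleton S] [Nonempty S] (p : Y ⟶ S)
    [IsSeparated p] (s : S ⟶ Y) (hs : s ≫ p = 𝟙 S) : closedPoints Y :=
  ⟨s (Classical.arbitrary S), by
    have := isClosedImmersion_of_comp_eq_id _ _ hs
    have h := s.isClosedEmbedding.isClosed_range
    rw [Set.range_eq_singleton (y := s (Classical.arbitrary S))
      (fun x => congrArg s (Subsingleton.elim _ _))] at h
    exact mem_closedPoints_iff.2 h⟩

/-- For an integral scheme `W` over `k`, the morphism `Spec k(η_W) ⟶ Spec k`. -/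
def genericPointStr {W : Scheme.{u}} [IsIntegral W] (p : W ⟶ Spec (.of k)) :
    Spec W.functionField ⟶ Spec (.of k) :=
  genericPointInclusion W ≫ p

/-- The generic fibre `X_{k(η_W)} = X ×_k k(η_W)` of the projection `X × W → W`, for an integral
curve `ι : W ⟶ X` in the `k`-scheme `f : X ⟶ Spec k`. -/
def genericFibre (f : X ⟶ Spec (.of k)) {W : Scheme.{u}} [IsIntegral W] (ι : W ⟶ X) :
    Scheme.{u} :=
  pullback f (genericPointStr (ι ≫ f))

/-- The structure morphism `X ×_k k(η_W) ⟶ Spec k(η_W)`. -/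
def genericFibreStr (f : X ⟶ Spec (.of k)) {W : Scheme.{u}} [IsIntegral W] (ι : W ⟶ X) :
    genericFibre f ι ⟶ Spec W.functionField :=
  pullback.snd f (genericPointStr (ι ≫ f))

instance (f : X ⟶ Spec (.of k)) [IsSeparated f] {W : Scheme.{u}} [IsIntegral W] (ι : W ⟶ X) :
    IsSeparated (genericFibreStr f ι) :=
  inferInstanceAs (IsSeparated (pullback.snd f (genericPointStr (ι ≫ f))))

instance (W : Scheme.{u}) [IsIntegral W] : Subsingleton (Spec W.functionField) :=
  inferInstanceAs (Subsingleton (PrimeSpectrum W.functionField))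

/-- The restriction of the graph `Δ_W ⊂ X × W` of `ι : W ⟶ X` to the generic fibre `X ×_k k(η_W)`:
the generic point `η_W` of `W`, viewed as a `k(η_W)`-rational point of `X ×_k k(η_W)`. -/
def graphPoint (f : X ⟶ Spec (.of k)) [IsSeparated f] {W : Scheme.{u}} [IsIntegral W]
    (ι : W ⟶ X) : closedPoints (genericFibre f ι) :=
  closedPointOfSection (genericFibreStr f ι)
    (pullback.lift (genericPointInclusion W ≫ ι) (𝟙 _) (by simp [genericPointStr]))
    (pullback.lift_snd _ _ _)

/-- The restriction of `{x₀} × W ⊂ X × W` to the generic fibre `X ×_k k(η_W)`, for a closed point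
`x₀` of `X`: the `k(η_W)`-rational point of `X ×_k k(η_W)` given by base change of the `k`-rational
point `x₀`. -/
def constantPoint [IsAlgClosed k] (f : X ⟶ Spec (.of k)) [IsSeparated f] [LocallyOfFiniteType f]
    {W : Scheme.{u}} [IsIntegral W] (ι : W ⟶ X) (x₀ : closedPoints X) :
    closedPoints (genericFibre f ι) :=
  closedPointOfSection (genericFibreStr f ι)
    (pullback.lift (genericPointStr (ι ≫ f) ≫ pointOfClosedPoint f x₀.1 (mem_closedPoints_iff.1 x₀.2)) (𝟙 _)
      (by rw [Category.assoc, pointOfClosedPoint_comp, Category.comp_id, Category.id_comp]))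
    (pullback.lift_snd _ _ _)

/-- The class `κ_W ∈ CH²(X ×_k k(η_W))` of the restriction of `Δ_W − {x₀} × W` to the generic
fibre of `X × W → W`, for an integral curve `ι : W ⟶ X`. -/
def kappa [IsAlgClosed k] (f : X ⟶ Spec (.of k)) [IsSeparated f] [LocallyOfFiniteType f]
    {W : Scheme.{u}} [IsIntegral W] (ι : W ⟶ X) (x₀ : closedPoints X) : CH₀ (genericFibre f ι) :=
  CH₀.cls (graphPoint f ι) - CH₀.cls (constantPoint f ι x₀)

/-- A curve `i : C ⟶ X` is a constant cycle curve if `κ_W` is torsion for every integral component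
`W` of `C`. Here `x₀` is the chosen closed point with `[x₀] = c_X`. -/
def IsConstantCycleCurve [IsAlgClosed k] (f : X ⟶ Spec (.of k)) [IsSeparated f]
    [LocallyOfFiniteType f] {C : Scheme.{u}} (i : C ⟶ X) (x₀ : closedPoints X) : Prop :=
  ∀ (W : Scheme.{u}) (j : W ⟶ C) (hj : IsIntegralComponent j),
    haveI := hj.isIntegral
    IsOfFinAddOrder (kappa f (j ≫ i) x₀)

/-- The order of a constant cycle curve: the maximum of the orders of the classes `κ_W` of its
integral components `W`. -/
def cccOrder [IsAlgClosed k] (f : X ⟶ Spec (.of k)) [IsSeparated f]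
    [LocallyOfFiniteType f] {C : Scheme.{u}} (i : C ⟶ X) (x₀ : closedPoints X) : ℕ :=
  sSup {n | ∃ (W : Scheme.{u}) (j : W ⟶ C) (hj : IsIntegralComponent j),
    haveI := hj.isIntegral
    n = addOrderOf (kappa f (j ≫ i) x₀)}

end

end K3CCC

namespace K3CCC

section Algebra

open TensorProduct

/-- Nullstellensatz: a nonzero element of a finitely generated domain over an algebraically closed
field does not vanish at some rational point. -/
lemma exists_algHom_ne_zero {k A : Type*} [Field k] [IsAlgClosed k] [CommRing A] [IsDomain A]
    [Algebra k A] [Algebra.FiniteType k A] {c : A} (hc : c ≠ 0) :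
    ∃ χ : A →ₐ[k] k, χ c ≠ 0 := by
  have : IsJacobsonRing A := isJacobsonRing_of_finiteType (A := k)
  have hj : (⊥ : Ideal A).jacobson = ⊥ :=
    IsJacobsonRing.out ‹_› (Ideal.IsPrime.isRadical Ideal.isPrime_bot)
  have : c ∉ (⊥ : Ideal A).jacobson := by rw [hj]; simpa using hc
  rw [Ideal.jacobson, Ideal.mem_sInf] at this
  push Not at this
  obtain ⟨m, ⟨-, hm⟩, hcm⟩ := this
  let _ : Field (A ⧸ m) := Ideal.Quotient.field m
  have : Module.Finite k (A ⧸ m) := finite_of_finite_type_of_isJacobsonRing k (A ⧸ m)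
  have hbij : Function.Bijective (algebraMap k (A ⧸ m)) :=
    IsAlgClosed.ringHom_bijective_of_isIntegral _ (algebraMap_isIntegral_iff.2 inferInstance)
  let e : k ≃ₐ[k] A ⧸ m := AlgEquiv.ofBijective (Algebra.ofId k (A ⧸ m)) hbij
  refine ⟨(e.symm : (A ⧸ m) →ₐ[k] k).comp (Ideal.Quotient.mkₐ k m), ?_⟩
  simpa [Ideal.Quotient.eq_zero_iff_mem] using hcm

lemma isDomain_tensorProduct_of_finiteType {k : Type*} (A B : Type*) [Field k] [IsAlgClosed k]
    [CommRing A] [IsDomain A] [Algebra k A] [Algebra.FiniteType k A] [CommRing B] [IsDomain B]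
    [Algebra k B] : IsDomain (A ⊗[k] B) := by
  let b := Module.Basis.ofVectorSpace k B
  let β := Algebra.TensorProduct.basis A b
  have : Nontrivial (A ⊗[k] B) := inferInstance
  have : NoZeroDivisors (A ⊗[k] B) := by
    refine ⟨fun {z w} hzw => ?_⟩
    by_contra! h
    have key (z : A ⊗[k] B) (hz : z ≠ 0) : ∃ i, β.repr z i ≠ 0 := by
      by_contra! h
      exact hz ((β.repr.map_eq_zero_iff).1 (Finsupp.ext h))
    obtain ⟨i, hi⟩ := key z h.1
    obtain ⟨j, hj⟩ := key w h.2
    obtain ⟨χ, hχ⟩ := exists_algHom_ne_zero (k := k) (mul_ne_zero hi hj)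
    let F : A ⊗[k] B →ₐ[k] B :=
      Algebra.TensorProduct.lift ((Algebra.ofId k B).comp χ) (AlgHom.id k B) fun _ _ => .all _ _
    have hF (z : A ⊗[k] B) (i) : b.repr (F z) i = χ (β.repr z i) := by
      induction z with
      | zero => simp
      | add x y hx hy => simp [hx, hy]
      | tmul a y =>
        simp [F, β, Algebra.ofId_apply, Algebra.TensorProduct.basis_repr_tmul,
          Algebra.algebraMap_eq_smul_one, mul_comm]
    rw [map_mul] at hχ
    have h1 : F z ≠ 0 := fun h0 => left_ne_zero_of_mul hχ (by rw [← hF, h0]; simp)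
    have h2 : F w ≠ 0 := fun h0 => right_ne_zero_of_mul hχ (by rw [← hF, h0]; simp)
    exact mul_ne_zero h1 h2 (by rw [← map_mul, hzw, map_zero])
  exact NoZeroDivisors.to_isDomain _

/-- Over an algebraically closed field the tensor product of two domains is a domain. -/
lemma isDomain_tensorProduct {k : Type*} (A B : Type*) [Field k] [IsAlgClosed k]
    [CommRing A] [IsDomain A] [Algebra k A] [CommRing B] [IsDomain B]
    [Algebra k B] : IsDomain (A ⊗[k] B) := by
  have : Nontrivial (A ⊗[k] B) := inferInstance
  have : NoZeroDivisors (A ⊗[k] B) := by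
    refine ⟨fun {z w} hzw => ?_⟩
    obtain ⟨C, hC, hz⟩ := exists_fg_and_mem_baseChange z
    obtain ⟨D, hD, hw⟩ := exists_fg_and_mem_baseChange w
    have hE : Algebra.FiniteType k ↥(C ⊔ D) := (C ⊔ D).fg_iff_finiteType.1 (hC.sup hD)
    let F : A ⊗[k] ↥(C ⊔ D) →ₐ[k] A ⊗[k] B :=
      Algebra.TensorProduct.map (AlgHom.id k A) (C ⊔ D).val
    have hF : Function.Injective F :=
      Module.Flat.lTensor_preserves_injective_linearMap (C ⊔ D).val.toLinearMap
        Subtype.val_injective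
    have hlift {G : Subalgebra k B} (hG : G ≤ C ⊔ D) {x : A ⊗[k] B} (hx : x ∈ G.baseChange A) :
        ∃ y, F y = x := by
      obtain ⟨y, rfl⟩ := hx
      refine ⟨Algebra.TensorProduct.map (AlgHom.id k A) (Subalgebra.inclusion hG) y, ?_⟩
      induction y with
      | zero => simp
      | add x y hx hy => simp only [map_add, hx, hy]
      | tmul a y => simp [F]
    obtain ⟨z, rfl⟩ := hlift le_sup_left hz
    obtain ⟨w, rfl⟩ := hlift le_sup_right hw
    have := isDomain_tensorProduct_of_finiteType (k := k) ↥(C ⊔ D) A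
    have : IsDomain (A ⊗[k] ↥(C ⊔ D)) :=
      (Algebra.TensorProduct.comm k A ↥(C ⊔ D)).toMulEquiv.isDomain _
    rw [← map_mul, map_eq_zero_iff F hF] at hzw
    exact (mul_eq_zero.1 hzw).imp (by rintro rfl; simp) (by rintro rfl; simp)
  exact NoZeroDivisors.to_isDomain _

/-- The kernel of a rational point of an algebra generated by `S`. -/
lemma ker_eq_span_of_adjoin_eq_top {K R : Type*} [CommRing K] [CommRing R] [Algebra K R] {S : Set R}
    (hS : Algebra.adjoin K S = ⊤) (χ : R →ₐ[K] K) :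
    RingHom.ker χ = Ideal.span ((fun s => s - algebraMap K R (χ s)) '' S) := by
  apply le_antisymm
  · have key (r : R) : r - algebraMap K R (χ r) ∈
        Ideal.span ((fun s => s - algebraMap K R (χ s)) '' S) := by
      have hr : r ∈ Algebra.adjoin K S := by rw [hS]; trivial
      induction hr using Algebra.adjoin_induction with
      | mem x hx => exact Ideal.subset_span ⟨x, hx, rfl⟩
      | algebraMap a => simp
      | add x y _ _ hx hy =>
        convert add_mem hx hy using 1
        simp only [map_add]; ring
      | mul x y _ _ hx hy =>
        convert add_mem (Ideal.mul_mem_left _ x hy)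
          (Ideal.mul_mem_right (algebraMap K R (χ y)) _ hx) using 1
        simp only [map_mul]; ring
    intro r hr
    have := key r
    rwa [show χ r = 0 from hr, map_zero, sub_zero] at this
  · rw [Ideal.span_le]
    rintro _ ⟨s, -, rfl⟩
    simp [RingHom.mem_ker]

/-- The Krull dimension does not increase along integral ring maps. -/
lemma ringKrullDim_le_of_isIntegral (R S : Type*) [CommRing R] [CommRing S] [Algebra R S]
    [Algebra.IsIntegral R S] : ringKrullDim S ≤ ringKrullDim R :=
  Order.krullDim_le_of_strictMono (PrimeSpectrum.comap (algebraMap R S)) fun P Q h =>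
    Ideal.IsIntegral.comap_lt_comap (I := P.asIdeal) (J := Q.asIdeal) h

lemma ringKrullDim_le_of_isIntegral_of_injective (R S : Type*) [CommRing R] [CommRing S]
    [Algebra R S] [Algebra.IsIntegral R S] (h : Function.Injective (algebraMap R S)) :
    ringKrullDim R ≤ ringKrullDim S := by
  refine iSup_le fun l => ?_
  have : FaithfulSMul R S := (faithfulSMul_iff_algebraMap_injective R S).2 h
  obtain ⟨P, -, hP, hPl⟩ := Ideal.exists_ideal_over_prime_of_isIntegral (S := S) l.head.asIdeal ⊥
    (by rw [← RingHom.ker_eq_comap_bot, (RingHom.injective_iff_ker_eq_bot _).1 h]; exact bot_le)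
  have : P.LiesOver l.head.asIdeal := ⟨hPl.symm⟩
  obtain ⟨L, hL, -⟩ := Ideal.exists_ltSeries_of_hasGoingUp (S := S) l P
  rw [← hL]
  exact le_iSup (fun p : LTSeries (PrimeSpectrum S) => ((p.length : ℕ∞) : WithBot ℕ∞)) L

/-- Extension of the base field does not increase the dimension of finitely generated algebras. -/
lemma ringKrullDim_tensorProduct_le (k K A : Type*) [Field k] [Field K] [Algebra k K]
    [CommRing A] [Nontrivial A] [Algebra k A] [Algebra.FiniteType k A] :
    ringKrullDim (K ⊗[k] A) ≤ ringKrullDim A := by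
  obtain ⟨n, g, hg, hfin⟩ := exists_finite_inj_algHom_of_fg k A
  algebraize [g.toRingHom]
  have h_int : Algebra.IsIntegral (MvPolynomial (Fin n) k) A := ⟨hfin.to_isIntegral⟩
  have h1 := ringKrullDim_le_of_isIntegral_of_injective (MvPolynomial (Fin n) k) A hg
  let G : K ⊗[k] MvPolynomial (Fin n) k →ₐ[K] K ⊗[k] A :=
    Algebra.TensorProduct.map (AlgHom.id K K) g
  have hG : G.toRingHom.IsIntegral := by
    intro x
    induction x with
    | zero => exact RingHom.isIntegralElem_zero _
    | add x y hx hy => exact RingHom.IsIntegralElem.add _ hx hy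
    | tmul a y =>
      rw [← mul_one a, ← one_mul y, ← Algebra.TensorProduct.tmul_mul_tmul]
      refine RingHom.IsIntegralElem.mul _ ?_ ?_
      · have e : G.toRingHom (a ⊗ₜ 1) = a ⊗ₜ 1 := by
          change G (a ⊗ₜ 1) = _
          simp [G]
        rw [← e]
        exact RingHom.isIntegralElem_map _
      · obtain ⟨p, hp, hpy⟩ := hfin.to_isIntegral y
        refine ⟨p.map (Algebra.TensorProduct.includeRight (R := k) (A := K)).toRingHom,
          hp.map _, ?_⟩
        have := congrArg (Algebra.TensorProduct.includeRight (R := k) (A := K) (B := A)) hpy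
        rw [map_zero] at this
        rw [Polynomial.eval₂_map, ← this, ← AlgHom.coe_toRingHom, Polynomial.hom_eval₂]
        congr 1
  let _ : Algebra (K ⊗[k] MvPolynomial (Fin n) k) (K ⊗[k] A) := G.toRingHom.toAlgebra
  have : Algebra.IsIntegral (K ⊗[k] MvPolynomial (Fin n) k) (K ⊗[k] A) := ⟨hG⟩
  refine (ringKrullDim_le_of_isIntegral (K ⊗[k] MvPolynomial (Fin n) k) (K ⊗[k] A)).trans ?_
  refine le_trans (le_of_eq ?_) h1
  rw [ringKrullDim_eq_of_ringEquiv (MvPolynomial.algebraTensorAlgEquiv k K).toRingEquiv]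
  simp

end Algebra

section Ord

open IsLocalRing TensorProduct

/-- Orders of vanishing are preserved by a flat unramified local homomorphism. -/
lemma ord_algebraMap_eq {A B : Type*} [CommRing A] [CommRing B] [IsLocalRing A] [IsLocalRing B]
    [Algebra A B] [IsLocalHom (algebraMap A B)] [Module.Flat A B]
    (h : (maximalIdeal A).map (algebraMap A B) = maximalIdeal B) (a : A) :
    Ring.ord B (algebraMap A B a) = Ring.ord A a := by
  have h1 : Module.length B (B ⧸ (maximalIdeal A).map (algebraMap A B)) = 1 := by
    rw [h, Module.length_eq_one_iff]
    exact isSimpleModule_iff_quot_maximal.2 ⟨_, inferInstance, ⟨LinearEquiv.refl _ _⟩⟩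
  have := IsLocalRing.length_baseChange A B (A ⧸ Ideal.span {a})
  rw [h1, mul_one] at this
  rw [Ring.ord, Ring.ord, ← this,
    ← (Algebra.TensorProduct.quotIdealMapEquivTensorQuot B
      (Ideal.span {a})).toLinearEquiv.length_eq,
    Ideal.map_span, Set.image_singleton]

/-- The order of vanishing of a generator of the maximal ideal. -/
lemma ord_eq_one_of_maximalIdeal_eq {A : Type*} [CommRing A] [IsLocalRing A] {a : A}
    (h : maximalIdeal A = Ideal.span {a}) : Ring.ord A a = 1 := by
  rw [Ring.ord, ← h, Module.length_eq_one_iff]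
  exact isSimpleModule_iff_quot_maximal.2 ⟨_, inferInstance, ⟨LinearEquiv.refl _ _⟩⟩

end Ord

section Dimension

lemma topologicalKrullDim_eq_krullDim (T : Scheme.{u}) :
    topologicalKrullDim T = Order.krullDim T :=
  Order.krullDim_eq_of_orderIso irreducibleSetEquivPoints

lemma coheight_le_topologicalKrullDim {T : Scheme.{u}} (z : T) :
    (Order.coheight z : WithBot ℕ∞) ≤ topologicalKrullDim T := by
  rw [topologicalKrullDim_eq_krullDim]
  exact Order.coheight_le_krullDim z

lemma coheight_ne_zero_of_isClosed {T : Scheme.{u}} [IsIntegral T] {z : T} (hz : IsClosed {z})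
    (hT : z ≠ genericPoint T) : Order.coheight z ≠ 0 := by
  intro h
  rw [Order.coheight_eq_zero] at h
  have h1 : z ≤ genericPoint T := genericPoint_specializes z
  have h2 : genericPoint T ≤ z := h h1
  have : z ⤳ genericPoint T := h2
  exact hT (this.mem_closed hz rfl).symm

/-- The generic point of a positive dimensional integral scheme is not closed. -/
lemma ne_genericPoint_of_isClosed {T : Scheme.{u}} [IsIntegral T]
    (hT : topologicalKrullDim T = 1) {z : T} (hz : IsClosed {z}) : z ≠ genericPoint T := by
  rintro rfl
  have : Subsingleton T := by
    have key (x : T) : x = genericPoint T := (genericPoint_specializes x).mem_closed hz rfl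
    exact ⟨fun x y => (key x).trans (key y).symm⟩
  have h0 : topologicalKrullDim T ≤ 0 := by
    rw [topologicalKrullDim_eq_krullDim]
    exact Order.krullDim_nonpos_of_subsingleton
  rw [hT] at h0
  exact absurd h0 (by decide)

/-- Closed points of an integral curve have codimension one. -/
lemma coheight_eq_one_of_isClosed {T : Scheme.{u}} [IsIntegral T]
    (hT : topologicalKrullDim T = 1) {z : T} (hz : IsClosed {z}) : Order.coheight z = 1 := by
  apply le_antisymm
  · have := coheight_le_topologicalKrullDim z
    rw [hT] at this
    exact_mod_cast this
  · exact Order.one_le_iff_ne_zero.2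
      (coheight_ne_zero_of_isClosed hz (ne_genericPoint_of_isClosed hT hz))

lemma isClosed_of_ne_genericPoint {T : Scheme.{u}} [IsIntegral T]
    (hT : topologicalKrullDim T = 1) {z : T} (hz : z ≠ genericPoint T) : IsClosed {z} := by
  rw [← closure_eq_iff_isClosed]
  refine subset_antisymm (fun x hx => ?_) subset_closure
  by_contra hne
  have hzx : z ⤳ x := specializes_iff_mem_closure.2 hx
  have h1 : x < z := lt_of_le_not_ge hzx fun (h : x ⤳ z) => hne (h.antisymm hzx).eq
  have h2 : z < genericPoint T := lt_of_le_not_ge (genericPoint_specializes z)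
    fun (h : z ⤳ genericPoint T) => hz (h.antisymm (genericPoint_specializes z)).eq
  have h3 : (2 : ℕ∞) ≤ Order.coheight x := by
    have := Order.coheight_add_one_le h1
    have := Order.coheight_add_one_le h2
    calc (2 : ℕ∞) = 0 + 1 + 1 := by norm_num
      _ ≤ _ := by
        refine le_trans ?_ ‹Order.coheight z + 1 ≤ _›
        gcongr
        exact le_trans (by gcongr; exact bot_le) this
  have h4 := coheight_le_topologicalKrullDim x
  rw [hT] at h4
  have h5 : Order.coheight x ≤ 1 := by exact_mod_cast h4
  exact absurd (h3.trans h5) (by decide)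

lemma topologicalKrullDim_affineOpen {T : Scheme.{u}} {U : T.Opens} (hU : IsAffineOpen U) :
    topologicalKrullDim U = ringKrullDim Γ(T, U) := by
  rw [← PrimeSpectrum.topologicalKrullDim_eq_ringKrullDim]
  exact IsHomeomorph.topologicalKrullDim_eq _ hU.isoSpec.hom.homeomorph.isHomeomorph

lemma coheight_le_ringKrullDim {T : Scheme.{u}} {U : T.Opens} (hU : IsAffineOpen U) {z : T}
    (hz : z ∈ U) : (Order.coheight z : WithBot ℕ∞) ≤ ringKrullDim Γ(T, U) := by
  rw [← topologicalKrullDim_affineOpen hU]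
  have := coheight_eq_of_isOpenImmersion (x := (⟨z, hz⟩ : U.toScheme)) U.ι
  have h2 := coheight_le_topologicalKrullDim (T := U.toScheme) ⟨z, hz⟩
  rw [← this] at h2
  exact h2

end Dimension

section RationalPoint

lemma ker_eq_span_of_isPushout {R A L B : CommRingCat.{u}} {f : R ⟶ A} {g : R ⟶ L} {a : A ⟶ B}
    {l : L ⟶ B} (h : IsPushout f g a l) (χ : B ⟶ L) (hχ : l ≫ χ = 𝟙 L) (G : Set A)
    (hG : letI := f.hom.toAlgebra; Algebra.adjoin R G = ⊤) :
    RingHom.ker χ.hom = Ideal.span ((fun x => a x - l (χ (a x))) '' G) := by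
  algebraize [f.hom, g.hom, a.hom, l.hom, (f ≫ a).hom]
  have : IsScalarTower R A B := .of_algebraMap_eq' rfl
  have : IsScalarTower R L B := .of_algebraMap_eq' (by
    change (f ≫ a).hom = (g ≫ l).hom
    rw [h.w])
  have hp : Algebra.IsPushout R L A B := CommRingCat.isPushout_iff_isPushout.1 h.flip
  have h1 := Algebra.TensorProduct.adjoin_one_tmul_image_eq_top (A := L) G hG
  have h2 : Algebra.adjoin L (a '' G) = ⊤ := by
    have := congrArg (Subalgebra.map (Algebra.IsPushout.equiv R L A B).toAlgHom) h1
    rw [AlgHom.map_adjoin, Algebra.map_top, (AlgHom.range_eq_top _).2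
      (Algebra.IsPushout.equiv R L A B).surjective] at this
    rw [← this]
    congr 1
    rw [Set.image_image]
    refine Set.image_congr fun x _ => ?_
    change _ = Algebra.IsPushout.equiv R L A B _
    rw [Algebra.IsPushout.equiv_tmul, map_one, one_mul]
    rfl
  let χ' : B →ₐ[L] L := { χ.hom with commutes' := fun r => congr($hχ r) }
  have := ker_eq_span_of_adjoin_eq_top h2 χ'
  rw [Set.image_image] at this
  exact this

lemma mem_basicOpen_iff_appLE_ne_zero {S Z : Scheme.{u}} [IsIntegral S] [Subsingleton S]
    (σ : S ⟶ Z) {V : Z.Opens} (x : S) (e : ⊤ ≤ σ ⁻¹ᵁ V) (r : Γ(Z, V)) :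
    σ x ∈ Z.basicOpen r ↔ σ.appLE V ⊤ e r ≠ 0 := by
  have h1 : σ x ∈ Z.basicOpen r ↔ x ∈ S.basicOpen (σ.appLE V ⊤ e r) := by
    rw [Scheme.basicOpen_appLE]
    exact ⟨fun h => ⟨trivial, h⟩, fun h => h.2⟩
  rw [h1, Scheme.mem_basicOpen S _ x (TopologicalSpace.Opens.mem_top x)]
  have hF := isField_of_isIntegral_of_subsingleton S
  constructor
  · intro h h0
    rw [h0, map_zero] at h
    exact not_isUnit_zero h
  · intro h
    exact (isUnit_iff_exists_inv.2 (hF.mul_inv_cancel h)).map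
      (S.presheaf.germ ⊤ x (TopologicalSpace.Opens.mem_top x)).hom

lemma comap_germ_eq_ker {S Z : Scheme.{u}} [IsIntegral S] [Subsingleton S] (σ : S ⟶ Z)
    {V : Z.Opens} (x : S) (hx : σ x ∈ V) (e : ⊤ ≤ σ ⁻¹ᵁ V) :
    (IsLocalRing.maximalIdeal (Z.presheaf.stalk (σ x))).comap (Z.presheaf.germ V (σ x) hx).hom =
      RingHom.ker (σ.appLE V ⊤ e).hom := by
  ext r
  rw [Ideal.mem_comap, IsLocalRing.mem_maximalIdeal, mem_nonunits_iff, RingHom.mem_ker,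
    not_iff_comm]
  exact (mem_basicOpen_iff_appLE_ne_zero σ x e r).symm.trans (Scheme.mem_basicOpen Z r (σ x) hx)

lemma map_comap_of_isLocalization {R A : Type*} [CommRing R] [CommRing A] (f : R →+* A)
    (M : Submonoid R) (hf : letI := f.toAlgebra; IsLocalization M A) (J : Ideal A) :
    (J.comap f).map f = J := by
  algebraize [f]
  exact IsLocalization.map_under M A J

/-- Ideals of a local ring of a scheme are generated by their sections over an affine chart. -/
lemma map_germ_comap_eq {Z : Scheme.{u}} {V : Z.Opens} (hV : IsAffineOpen V) (z : Z)
    (hz : z ∈ V) (J : Ideal (Z.presheaf.stalk z)) :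
    (J.comap (Z.presheaf.germ V z hz).hom).map (Z.presheaf.germ V z hz).hom = J := by
  exact map_comap_of_isLocalization _ _ (hV.isLocalization_stalk ⟨z, hz⟩) J

lemma maximalIdeal_stalk_eq_map_ker {S Z : Scheme.{u}} [IsIntegral S] [Subsingleton S] (σ : S ⟶ Z)
    {V : Z.Opens} (hV : IsAffineOpen V) (x : S) (hx : σ x ∈ V) (e : ⊤ ≤ σ ⁻¹ᵁ V) :
    IsLocalRing.maximalIdeal (Z.presheaf.stalk (σ x)) =
      (RingHom.ker (σ.appLE V ⊤ e).hom).map (Z.presheaf.germ V (σ x) hx).hom := by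
  rw [← comap_germ_eq_ker σ x hx e, map_germ_comap_eq hV]

lemma top_le_preimage_of_mem {S Z : Scheme.{u}} [Subsingleton S] (σ : S ⟶ Z)
    {V : Z.Opens} {x : S} (hx : σ x ∈ V) : ⊤ ≤ σ ⁻¹ᵁ V := fun y _ => by
  rw [Subsingleton.elim y x]; exact hx

end RationalPoint

section BaseChange

lemma ringKrullDim_le_of_isPushout {R A L B : CommRingCat.{u}} {f : R ⟶ A} {g : R ⟶ L} {a : A ⟶ B}
    {l : L ⟶ B} (h : IsPushout f g a l) (hf : f.hom.FiniteType) (hR : IsField R) (hL : IsField L)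
    [Nontrivial A] : ringKrullDim B ≤ ringKrullDim A := by
  algebraize [f.hom, g.hom, a.hom, l.hom, (f ≫ a).hom]
  have : IsScalarTower R A B := .of_algebraMap_eq' rfl
  have : IsScalarTower R L B := .of_algebraMap_eq' (by
    change (f ≫ a).hom = (g ≫ l).hom
    rw [h.w])
  have hp : Algebra.IsPushout R L A B := CommRingCat.isPushout_iff_isPushout.1 h.flip
  rw [← ringKrullDim_eq_of_ringEquiv (Algebra.IsPushout.equiv R L A B).toRingEquiv]
  let _ : Field R := hR.toField
  let _ : Field L := hL.toField
  exact ringKrullDim_tensorProduct_le R L A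

variable {k : Type u} [Field k] {S T Z : Scheme.{u}}
  {p : T ⟶ Spec (.of k)} {s : S ⟶ Spec (.of k)} {π : Z ⟶ T} {q : Z ⟶ S}

lemma geometricallyIntegral_of_isAlgClosed [IsAlgClosed k] {A : CommRingCat.{u}} [IsDomain A]
    (s : Spec A ⟶ Spec (.of k)) : GeometricallyIntegral s := by
  obtain ⟨φ, rfl⟩ := Spec.map_surjective s
  refine ⟨geometrically_iff_of_commRing.2 fun L _ _ Y fst snd h => ?_⟩
  algebraize [φ.hom]
  have h' := isPullback_SpecMap_of_isPushout _ _ _ _ (CommRingCat.isPushout_tensorProduct k A L)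
  have := isDomain_tensorProduct (k := k) A L
  have e : Y ≅ Spec (.of (TensorProduct k A L)) := h.isoIsPullback _ _ h'
  exact .of_isIso e.inv

lemma isIntegral_of_isPullback [IsIntegral S] [Subsingleton S] [IsAlgClosed k] [IsIntegral T]
    [IsLocallyNoetherian T]
    (H : IsPullback π q p s) : IsIntegral Z := by
  have : IsDomain Γ(S, ⊤) := inferInstance
  have := geometricallyIntegral_of_isAlgClosed (S.isoSpec.inv ≫ s)
  have : IsIntegral (pullback p (S.isoSpec.inv ≫ s)) := inferInstance
  have H' : IsPullback π (q ≫ S.isoSpec.hom) p (S.isoSpec.inv ≫ s) :=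
    H.of_iso (.refl _) (.refl _) S.isoSpec (.refl _) (by simp) (by simp) (by simp) (by simp)
  exact .of_isIso H'.isoPullback.inv

lemma isLocallyNoetherian_of_isPullback [IsIntegral S] [Subsingleton S]
    [LocallyOfFiniteType p] (H : IsPullback π q p s) :
    IsLocallyNoetherian Z := by
  have : LocallyOfFiniteType q := MorphismProperty.of_isPullback H ‹_›
  exact LocallyOfFiniteType.isLocallyNoetherian q

lemma flat_of_isPullback (H : IsPullback π q p s) : Flat π :=
  MorphismProperty.of_isPullback H.flip (inferInstance : Flat s)

lemma surjective_of_isPullback [IsIntegral S] (H : IsPullback π q p s) : Surjective π :=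
  MorphismProperty.of_isPullback H.flip (inferInstance : Surjective s)

lemma map_genericPoint_of_surjective [IsIntegral T] [IsIntegral Z] (π : Z ⟶ T) [Surjective π] :
    π (genericPoint Z) = genericPoint T := by
  apply ((genericPoint_spec T).eq _).symm
  have := (genericPoint_spec Z).image π.continuous
  rwa [Set.image_univ, π.surjective.range_eq, closure_univ] at this

lemma le_preimage_top {X Y : Scheme.{u}} (f : X ⟶ Y) (U : X.Opens) : U ≤ f ⁻¹ᵁ ⊤ := le_top

lemma isPushout_of_isPullback [IsAffine S] (H : IsPullback π q p s) {U : T.Opens}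
    (hU : IsAffineOpen U) :
    IsPushout (p.appLE ⊤ U (le_preimage_top p U)) (s.appLE ⊤ ⊤ (le_preimage_top s ⊤))
      (π.appLE U (π ⁻¹ᵁ U) le_rfl) (q.appLE ⊤ (π ⁻¹ᵁ U) (le_preimage_top q _)) :=
  (isIso_pushoutSection_iff H le_top le_top (by simp)).1
    (isIso_pushoutSection_of_isAffineOpen H le_top le_top (by simp) (isAffineOpen_top _)
      (isAffineOpen_top _) hU)

lemma isAffineHom_of_isPullback [IsAffine S] (H : IsPullback π q p s) : IsAffineHom π :=
  MorphismProperty.of_isPullback H.flip (inferInstance : IsAffineHom s)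

lemma coheight_le_one_of_isPullback [IsIntegral S] [Subsingleton S] [LocallyOfFiniteType p]
    (H : IsPullback π q p s)
    (hT : topologicalKrullDim T ≤ 1) (z : Z) : Order.coheight z ≤ 1 := by
  obtain ⟨_, ⟨U, hU, rfl⟩, hzU, -⟩ :=
      T.isBasis_affineOpens.exists_subset_of_mem_open (Set.mem_univ (π z)) isOpen_univ
  have := isAffineHom_of_isPullback H
  have h1 := coheight_le_ringKrullDim (hU.preimage π) (z := z) hzU
  have hp := isPushout_of_isPullback H hU
  have h2 : ringKrullDim Γ(T, U) ≤ 1 := by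
    rw [← topologicalKrullDim_affineOpen hU]
    exact (topologicalKrullDim_subspace_le T U).trans hT
  have h3 : ringKrullDim Γ(Z, π ⁻¹ᵁ U) ≤ ringKrullDim Γ(T, U) := by
    have hft := LocallyOfFiniteType.finiteType_appLE p (isAffineOpen_top _) hU le_top
    have hk : IsField Γ(Spec (.of k), ⊤) := isField_of_isIntegral_of_subsingleton _
    have hL : IsField Γ(S, ⊤) := isField_of_isIntegral_of_subsingleton _
    have : Nontrivial Γ(T, U) := by
      have : Nonempty U := ⟨⟨_, hzU⟩⟩
      exact Scheme.component_nontrivial T U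
    exact ringKrullDim_le_of_isPushout hp hft hk hL
  exact_mod_cast h1.trans (h3.trans h2)

end BaseChange

section ConstantPoints

variable {k : Type u} [Field k] {S T Z : Scheme.{u}}
  {p : T ⟶ Spec (.of k)} {s : S ⟶ Spec (.of k)} {π : Z ⟶ T} {q : Z ⟶ S}

/-- The section of the base change `Z = T ×ₖ S ⟶ S` through the fibre over a rational point. -/
lemma isPullback_lift (H : IsPullback π q p s) (c : Spec (.of k) ⟶ T) (hc : c ≫ p = 𝟙 _) :
    IsPullback (H.lift (s ≫ c) (𝟙 S) (by simp [hc])) s π c := by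
  refine IsPullback.of_right (h₁₂ := q) (h₂₂ := p) (v₁₃ := s) ?_ (by simp) H.flip
  simpa [hc] using IsPullback.of_id_fst (f := s)

/-- The points of the base change over a closed point of `T` lie on a section. -/
lemma exists_section_of_isClosed [IsAlgClosed k] [LocallyOfFiniteType p] (H : IsPullback π q p s)
    (t : T) (ht : IsClosed {t}) :
    ∃ (c : Spec (.of k) ⟶ T) (σ : S ⟶ Z), c ≫ p = 𝟙 _ ∧ σ ≫ q = 𝟙 S ∧ σ ≫ π = s ≫ c ∧
      (∀ a, c a = t) ∧ ∀ z, π z = t → ∃ y, σ y = z := by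
  have hc := pointOfClosedPoint_comp p t ht
  refine ⟨pointOfClosedPoint p t ht, H.lift (s ≫ pointOfClosedPoint p t ht) (𝟙 S) (by simp), hc,
    by simp, by simp, by simp, fun z hz => ?_⟩
  obtain ⟨y, hy, -⟩ := Scheme.exists_preimage_of_isPullback (isPullback_lift H _ hc)
    z (IsLocalRing.closedPoint k) (by rw [hz]; exact (pointOfClosedPoint_apply p t ht _).symm)
  exact ⟨y, hy⟩

/-- There is exactly one point over a closed point. -/
lemma eq_of_map_eq_of_isClosed [IsAlgClosed k] [LocallyOfFiniteType p] [Subsingleton S]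
    (H : IsPullback π q p s) {z z' : Z} (hz : IsClosed {π z}) (h : π z = π z') : z = z' := by
  obtain ⟨_, σ, -, -, -, -, hσ⟩ := exists_section_of_isClosed H (π z) hz
  obtain ⟨y, rfl⟩ := hσ z rfl
  obtain ⟨y', rfl⟩ := hσ z' h.symm
  rw [Subsingleton.elim y y']

lemma appLE_apply_appLE_apply {X Y W : Scheme.{u}} (f : X ⟶ Y) (g : Y ⟶ W) {h : X ⟶ W}
    (hfg : f ≫ g = h) {A : W.Opens} {B : Y.Opens} {C : X.Opens}
    (e₁ : B ≤ g ⁻¹ᵁ A) (e₂ : C ≤ f ⁻¹ᵁ B) (e₃ : C ≤ h ⁻¹ᵁ A) (x : Γ(W, A)) :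
    f.appLE B C e₂ (g.appLE A B e₁ x) = h.appLE A C e₃ x := by
  subst hfg
  rw [← Scheme.Hom.appLE_comp_appLE f g A B C e₁ e₂]
  rfl

lemma id_appLE_apply {X : Scheme.{u}} {U : X.Opens} (e : U ≤ 𝟙 X ⁻¹ᵁ U) (x : Γ(X, U)) :
    (𝟙 X : X ⟶ X).appLE U U e x = x := by
  rw [Scheme.Hom.appLE, Scheme.Hom.id_app]
  exact congr($(X.presheaf.map_id _) x)

lemma appLE_comp_appLE_eq_id {X Y : Scheme.{u}} {f : X ⟶ Y} {g : Y ⟶ X} (hfg : f ≫ g = 𝟙 X)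
    {V : Y.Opens} (e₁ : V ≤ g ⁻¹ᵁ ⊤) (e₂ : ⊤ ≤ f ⁻¹ᵁ V) :
    g.appLE ⊤ V e₁ ≫ f.appLE V ⊤ e₂ = 𝟙 _ := by
  ext x
  rw [CommRingCat.comp_apply, appLE_apply_appLE_apply f g hfg e₁ e₂ (le_preimage_top _ _),
    id_appLE_apply]
  rfl

/-- The base change is unramified at the closed points of `T`. -/
lemma map_maximalIdeal_stalkMap [IsAlgClosed k] [LocallyOfFiniteType p] [IsIntegral S]
    [Subsingleton S] (H : IsPullback π q p s) (z : Z) (hz : IsClosed {π z}) :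
    (IsLocalRing.maximalIdeal (T.presheaf.stalk (π z))).map (π.stalkMap z).hom =
      IsLocalRing.maximalIdeal (Z.presheaf.stalk z) := by
  apply le_antisymm
  · rw [Ideal.map_le_iff_le_comap]
    exact fun a ha h => ha (isUnit_of_map_unit (π.stalkMap z).hom a h)
  obtain ⟨c, σ, hc, hσq, hσπ, hct, hσ⟩ := exists_section_of_isClosed H (π z) hz
  obtain ⟨y, rfl⟩ := hσ z rfl
  obtain ⟨_, ⟨U, hU, rfl⟩, hzU, -⟩ :=
    T.isBasis_affineOpens.exists_subset_of_mem_open (Set.mem_univ (π (σ y))) isOpen_univ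
  have := isAffineHom_of_isPullback H
  have hσU := top_le_preimage_of_mem σ (V := π ⁻¹ᵁ U) hzU
  have hcU : ⊤ ≤ c ⁻¹ᵁ U :=
    top_le_preimage_of_mem c (x := s y) (by rw [hct]; exact hzU)
  rw [maximalIdeal_stalk_eq_map_ker σ (hU.preimage π) y hzU hσU,
    ker_eq_span_of_isPushout (isPushout_of_isPullback H hU) (σ.appLE _ _ hσU)
      (appLE_comp_appLE_eq_id hσq _ _) Set.univ
      (by
        let _ := (p.appLE ⊤ U (le_preimage_top p U)).hom.toAlgebra
        exact Algebra.adjoin_univ _ _),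
    Ideal.map_span, Ideal.span_le]
  rintro _ ⟨_, ⟨x, -, rfl⟩, rfl⟩
  let w := x - p.appLE ⊤ U (le_preimage_top p U) (c.appLE U ⊤ hcU x)
  have hcw : c.appLE U ⊤ hcU w = 0 := by
    rw [map_sub, appLE_apply_appLE_apply c p hc (le_preimage_top p U) hcU (le_preimage_top _ _),
      id_appLE_apply, sub_self]
  have hsU : ⊤ ≤ (s ≫ c) ⁻¹ᵁ U := hσπ ▸ hσU
  have h1 : π.appLE U (π ⁻¹ᵁ U) le_rfl x - q.appLE ⊤ (π ⁻¹ᵁ U) (le_preimage_top q _)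
      (σ.appLE _ ⊤ hσU (π.appLE U (π ⁻¹ᵁ U) le_rfl x)) = π.appLE U (π ⁻¹ᵁ U) le_rfl w := by
    rw [map_sub, appLE_apply_appLE_apply σ π hσπ le_rfl hσU hsU,
      ← appLE_apply_appLE_apply s c rfl hcU (le_preimage_top s _) hsU,
      appLE_apply_appLE_apply q s rfl _ _ (le_preimage_top _ _),
      appLE_apply_appLE_apply π p H.w _ _ (le_preimage_top _ _)]
  have h2 : T.presheaf.germ U (π (σ y)) hzU w ∈
      IsLocalRing.maximalIdeal (T.presheaf.stalk (π (σ y))) := by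
    rw [IsLocalRing.mem_maximalIdeal, mem_nonunits_iff, ← Scheme.mem_basicOpen,
      ← hct (s y), mem_basicOpen_iff_appLE_ne_zero c _ hcU]
    simpa using hcw
  have h3 := Ideal.mem_map_of_mem (π.stalkMap (σ y)).hom h2
  have h4 : π.stalkMap (σ y) (T.presheaf.germ U (π (σ y)) hzU w) =
      Z.presheaf.germ (π ⁻¹ᵁ U) (σ y) hzU (π.appLE U (π ⁻¹ᵁ U) le_rfl w) := by
    simp [Scheme.Hom.appLE]
  have h5 := h4 ▸ h3
  rw [← h1] at h5
  exact h5

end ConstantPoints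

section FunctionField

/-- The homomorphism of function fields induced by a morphism that preserves generic points. -/
noncomputable def functionFieldMap {Z T : Scheme.{u}} [IsIntegral Z] [IsIntegral T] (π : Z ⟶ T)
    (h : π (genericPoint Z) = genericPoint T) : T.functionField →+* Z.functionField :=
  (T.presheaf.stalkSpecializes (specializes_of_eq h) ≫ π.stalkMap (genericPoint Z)).hom

lemma functionFieldMap_algebraMap {Z T : Scheme.{u}} [IsIntegral Z] [IsIntegral T] (π : Z ⟶ T)
    (h : π (genericPoint Z) = genericPoint T) (z : Z) (a : T.presheaf.stalk (π z)) :
    functionFieldMap π h (algebraMap _ T.functionField a) =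
      algebraMap _ Z.functionField (π.stalkMap z a) := by
  have h1 := Scheme.Hom.stalkSpecializes_stalkMap π _ _ (genericPoint_specializes z)
  have h2 := congr($h1 a)
  refine Eq.trans ?_ h2
  rw [← T.presheaf.stalkSpecializes_comp (specializes_of_eq h)
    (genericPoint_specializes (π z))]
  rfl

/-- The order of vanishing of a regular function. -/
lemma ord_algebraMap_stalk {Z : Scheme.{u}} [IsIntegral Z] [IsLocallyNoetherian Z] {z : Z}
    (hz : Order.coheight z = 1) {a : Z.presheaf.stalk z} (ha : a ≠ 0) {n : ℕ}
    (hn : Ring.ord (Z.presheaf.stalk z) a = n) :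
    Scheme.ord (algebraMap _ Z.functionField a) z = n := by
  have : Ring.KrullDimLE 1 (Z.presheaf.stalk z) := krullDimLE_of_coheight_le hz.le
  have ha' : algebraMap _ Z.functionField a ≠ 0 := by
    rwa [Ne, map_eq_zero_iff _ (IsFractionRing.injective (Z.presheaf.stalk z) Z.functionField)]
  rw [Scheme.ord_eq_iff hz ha']
  change Ring.ordFrac (Z.presheaf.stalk z) (algebraMap _ Z.functionField a) = _
  rw [Ring.ordFrac_eq_ord _ ha,
    Ring.ordMonoidWithZeroHom_eq_coe _ (mem_nonZeroDivisors_of_ne_zero ha) hn]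

lemma exists_ord_stalk_eq {Z : Scheme.{u}} [IsIntegral Z] [IsLocallyNoetherian Z] {z : Z}
    (hz : Order.coheight z = 1) {a : Z.presheaf.stalk z} (ha : a ≠ 0) :
    ∃ n : ℕ, Ring.ord (Z.presheaf.stalk z) a = n := by
  have : Ring.KrullDimLE 1 (Z.presheaf.stalk z) := krullDimLE_of_coheight_le hz.le
  obtain ⟨n, hn⟩ := ENat.ne_top_iff_exists.1 (Ring.ord_ne_top (mem_nonZeroDivisors_of_ne_zero ha))
  exact ⟨n, hn.symm⟩

lemma exists_mul_algebraMap_eq {T : Scheme.{u}} [IsIntegral T] (t : T) {φ : T.functionField}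
    (hφ : φ ≠ 0) : ∃ a b : T.presheaf.stalk t, a ≠ 0 ∧ b ≠ 0 ∧
      φ * algebraMap _ T.functionField b = algebraMap _ T.functionField a := by
  obtain ⟨a, b, hb, rfl⟩ := IsFractionRing.div_surjective (A := T.presheaf.stalk t) φ
  have hb0 := nonZeroDivisors.ne_zero hb
  have hb' : algebraMap _ T.functionField b ≠ 0 := by
    rwa [Ne, map_eq_zero_iff _ (IsFractionRing.injective (T.presheaf.stalk t) T.functionField)]
  refine ⟨a, b, ?_, hb0, div_mul_cancel₀ _ hb'⟩
  rintro rfl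
  simp at hφ

lemma algebraMap_stalk_ne_zero {T : Scheme.{u}} [IsIntegral T] {t : T} {a : T.presheaf.stalk t}
    (ha : a ≠ 0) : algebraMap _ T.functionField a ≠ 0 := by
  rwa [Ne, map_eq_zero_iff _ (IsFractionRing.injective (T.presheaf.stalk t) T.functionField)]

/-- If orders of regular functions at `π z` are preserved by pull-back, so are orders of rational
functions. -/
lemma ord_functionFieldMap_eq_of_stalk {Z T : Scheme.{u}} [IsIntegral Z] [IsIntegral T]
    [IsLocallyNoetherian Z] (π : Z ⟶ T)
    (h : π (genericPoint Z) = genericPoint T) {z : Z} (hz : Order.coheight z = 1)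
    {φ : T.functionField} (hφ : φ ≠ 0) {a b : T.presheaf.stalk (π z)} (ha : a ≠ 0) (hb : b ≠ 0)
    (hab : φ * algebraMap _ T.functionField b = algebraMap _ T.functionField a) {m n : ℕ}
    (hm : Ring.ord _ (π.stalkMap z a) = m) (hn : Ring.ord _ (π.stalkMap z b) = n) :
    Scheme.ord (functionFieldMap π h φ) z = m - n := by
  have hinj := (functionFieldMap π h).injective
  have key {x : T.presheaf.stalk (π z)} (hx : x ≠ 0) : π.stalkMap z x ≠ 0 := by
    intro h0
    have := functionFieldMap_algebraMap π h z x
    rw [h0, map_zero, map_eq_zero_iff _ hinj] at this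
    exact algebraMap_stalk_ne_zero hx this
  have h1 := congrArg (functionFieldMap π h) hab
  rw [map_mul, functionFieldMap_algebraMap, functionFieldMap_algebraMap] at h1
  have h2 := Scheme.ord_mul (x := z) ((map_ne_zero_iff _ hinj).2 hφ)
    (algebraMap_stalk_ne_zero (key hb))
  rw [h1, ord_algebraMap_stalk hz (key ha) hm, ord_algebraMap_stalk hz (key hb) hn] at h2
  linarith

lemma ord_functionFieldMap_of_isUnramified {Z T : Scheme.{u}} [IsIntegral Z] [IsIntegral T]
    [IsLocallyNoetherian Z] [IsLocallyNoetherian T] (π : Z ⟶ T) [Flat π]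
    (h : π (genericPoint Z) = genericPoint T) {z : Z} (hz : Order.coheight z = 1)
    (hπz : Order.coheight (π z) = 1)
    (hm : (IsLocalRing.maximalIdeal (T.presheaf.stalk (π z))).map (π.stalkMap z).hom =
      IsLocalRing.maximalIdeal (Z.presheaf.stalk z)) {φ : T.functionField} (hφ : φ ≠ 0) :
    Scheme.ord (functionFieldMap π h φ) z = Scheme.ord φ (π z) := by
  obtain ⟨a, b, ha, hb, hab⟩ := exists_mul_algebraMap_eq (π z) hφ
  obtain ⟨m, hma⟩ := exists_ord_stalk_eq hπz ha
  obtain ⟨n, hnb⟩ := exists_ord_stalk_eq hπz hb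
  have h1 := Scheme.ord_mul (x := π z) hφ (algebraMap_stalk_ne_zero hb)
  rw [hab, ord_algebraMap_stalk hπz ha hma, ord_algebraMap_stalk hπz hb hnb] at h1
  have key (x : T.presheaf.stalk (π z)) :
      Ring.ord _ (π.stalkMap z x) = Ring.ord _ x := by
    algebraize [(π.stalkMap z).hom]
    have : Module.Flat (T.presheaf.stalk (π z)) (Z.presheaf.stalk z) := Flat.stalkMap π z
    have : IsLocalHom (algebraMap (T.presheaf.stalk (π z)) (Z.presheaf.stalk z)) :=
      inferInstanceAs (IsLocalHom (π.stalkMap z).hom)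
    exact ord_algebraMap_eq hm x
  rw [ord_functionFieldMap_eq_of_stalk π h hz hφ ha hb hab ((key a).trans hma)
    ((key b).trans hnb)]
  linarith

lemma ord_functionFieldMap_of_eq_genericPoint {Z T : Scheme.{u}} [IsIntegral Z] [IsIntegral T]
    [IsLocallyNoetherian Z] (π : Z ⟶ T)
    (h : π (genericPoint Z) = genericPoint T) {z : Z} (hz : Order.coheight z = 1)
    (hπz : π z = genericPoint T) {φ : T.functionField} (hφ : φ ≠ 0) :
    Scheme.ord (functionFieldMap π h φ) z = 0 := by
  obtain ⟨a, b, ha, hb, hab⟩ := exists_mul_algebraMap_eq (π z) hφ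
  have hF : IsField (T.presheaf.stalk (π z)) := by
    rw [hπz]; exact Field.toIsField T.functionField
  have key {x : T.presheaf.stalk (π z)} (hx : x ≠ 0) :
      Ring.ord _ (π.stalkMap z x) = (0 : ℕ) :=
    Ring.ord_of_isUnit ((isUnit_iff_exists_inv.2 (hF.mul_inv_cancel hx)).map (π.stalkMap z).hom)
  rw [ord_functionFieldMap_eq_of_stalk π h hz hφ ha hb hab (key ha) (key hb)]
  simp

end FunctionField

section ResidueDegree

lemma residueFieldMap_bijective_of_eq_id {S : Scheme.{u}} {f : S ⟶ S} (hf : f = 𝟙 S) (y : S) :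
    Function.Bijective (f.residueFieldMap y) := by
  subst hf
  rw [Scheme.residueFieldMap_id]
  exact Function.bijective_id

/-- Morphisms over `S` have degree one at the points of sections. -/
lemma residueDegree_eq_one {S Z Y : Scheme.{u}} {q : Z ⟶ S} {r : Y ⟶ S} (g : Z ⟶ Y)
    (hg : g ≫ r = q) {σ : S ⟶ Z} (hσ : σ ≫ q = 𝟙 S) (y : S) : g.residueDegree (σ y) = 1 := by
  have h1 := residueFieldMap_bijective_of_eq_id (f := σ ≫ g ≫ r) (by rw [hg, hσ]) y
  rw [Scheme.residueFieldMap_comp, Scheme.residueFieldMap_comp] at h1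
  have h2 : Function.Surjective (g.residueFieldMap (σ y)) := by
    intro x
    obtain ⟨w, hw⟩ := h1.2 (σ.residueFieldMap y x)
    exact ⟨_, (σ.residueFieldMap y).hom.injective hw⟩
  rw [Scheme.Hom.residueDegree]
  let _ := (g.residueFieldMap (σ y)).hom.toAlgebra
  rw [← (LinearEquiv.ofBijective (Algebra.linearMap (Y.residueField (g (σ y)))
    (Z.residueField (σ y))) ⟨(g.residueFieldMap (σ y)).hom.injective, h2⟩).finrank_eq]
  exact Module.finrank_self _

end ResidueDegree

section BaseChangeCycles

lemma topologicalKrullDim_eq_one {Z : Scheme.{u}} [IsIntegral Z]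
    (h : ∀ z : Z, Order.coheight z ≤ 1) (h' : ∃ z : Z, z ≠ genericPoint Z) :
    topologicalKrullDim Z = 1 := by
  rw [topologicalKrullDim_eq_krullDim]
  apply le_antisymm
  · rw [Order.krullDim_eq_iSup_coheight]
    exact iSup_le fun z => by exact_mod_cast h z
  · obtain ⟨z, hz⟩ := h'
    have h2 : z < genericPoint Z := lt_of_le_not_ge (genericPoint_specializes z)
      fun (h : z ⤳ genericPoint Z) => hz (h.antisymm (genericPoint_specializes z)).eq
    have h3 : (1 : ℕ∞) ≤ Order.coheight z :=
      le_trans (by simp) (Order.coheight_add_one_le h2)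
    exact le_trans (by exact_mod_cast h3) (Order.coheight_le_krullDim z)

lemma exists_ne_genericPoint {T : Scheme.{u}} [IsIntegral T] (hT : topologicalKrullDim T = 1) :
    ∃ t : T, t ≠ genericPoint T := by
  by_contra! h
  have : IsClosed {genericPoint T} := by
    rw [show ({genericPoint T} : Set T) = Set.univ from Set.eq_univ_of_forall h]
    exact isClosed_univ
  exact ne_genericPoint_of_isClosed hT this rfl

variable {k : Type u} [Field k] {S T Z : Scheme.{u}}
  {p : T ⟶ Spec (.of k)} [LocallyOfFiniteType p]
  {s : S ⟶ Spec (.of k)} {π : Z ⟶ T} {q : Z ⟶ S}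

lemma topologicalKrullDim_of_isPullback [IsIntegral S] [Subsingleton S] [IsIntegral T]
    [IsIntegral Z]
    (H : IsPullback π q p s) (hT : topologicalKrullDim T = 1) : topologicalKrullDim Z = 1 := by
  refine topologicalKrullDim_eq_one (coheight_le_one_of_isPullback H hT.le) ?_
  obtain ⟨t, ht⟩ := exists_ne_genericPoint hT
  have := surjective_of_isPullback H
  obtain ⟨z, rfl⟩ := π.surjective t
  exact ⟨z, fun h => ht (by rw [h, map_genericPoint_of_surjective])⟩

variable [IsAlgClosed k]

lemma residueDegree_eq_one_of_isPullback {Y : Scheme.{u}} {r : Y ⟶ S} (H : IsPullback π q p s)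
    (g : Z ⟶ Y) (hg : g ≫ r = q) (z : Z) (hz : IsClosed {π z}) : g.residueDegree z = 1 := by
  obtain ⟨c, σ, hc, hσq, -, -, hσ⟩ := exists_section_of_isClosed H (π z) hz
  obtain ⟨y, rfl⟩ := hσ z rfl
  exact residueDegree_eq_one g hg hσq y

lemma residueDegree_eq_one_of_isClosed {X : Scheme.{u}} {f : X ⟶ Spec (.of k)} (g : T ⟶ X)
    (hg : g ≫ f = p) (t : T) (ht : IsClosed {t}) : g.residueDegree t = 1 :=
  residueDegree_eq_one_of_isPullback (IsPullback.of_id_fst (f := p)) g hg t ht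

variable [Subsingleton S]

lemma exists_closedPoint_of_isPullback [IsIntegral S] (H : IsPullback π q p s)
    (t : closedPoints T) :
    ∃ z : closedPoints Z, π z.1 = t.1 := by
  have := surjective_of_isPullback H
  have ht := mem_closedPoints_iff.1 t.2
  obtain ⟨z, hz⟩ := π.surjective t.1
  refine ⟨⟨z, mem_closedPoints_iff.2 ?_⟩, hz⟩
  have : {z} = π ⁻¹' {t.1} := by
    ext z'
    refine ⟨fun h => by rw [h]; exact hz, fun h => ?_⟩
    exact (eq_of_map_eq_of_isClosed H (by rw [hz]; exact ht)
      (hz.trans (Set.mem_singleton_iff.1 h).symm)).symm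
  rw [this]
  exact ht.preimage π.continuous

/-- The divisor of the pull-back of a rational function. -/
lemma isDivisorOf_mapDomain [IsIntegral S] [IsIntegral T] [IsLocallyNoetherian T] [IsIntegral Z]
    [IsLocallyNoetherian Z] (H : IsPullback π q p s) (hT : topologicalKrullDim T = 1)
    (h : π (genericPoint Z) = genericPoint T) {φ : T.functionField} (hφ : φ ≠ 0)
    {D : ZeroCycle T} (hD : IsDivisorOf D φ) (b : closedPoints T → closedPoints Z)
    (hb : ∀ t, π (b t).1 = t.1) : IsDivisorOf (D.mapDomain b) (functionFieldMap π h φ) := by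
  have hinj : Function.Injective b := fun t t' htt => Subtype.ext (by rw [← hb, htt, hb])
  have hZ := topologicalKrullDim_of_isPullback H hT
  have := flat_of_isPullback H
  intro z
  have hz := mem_closedPoints_iff.1 z.2
  by_cases hπz : IsClosed {π z.1}
  · have hbz : b ⟨π z.1, hπz⟩ = z := Subtype.ext
      (eq_of_map_eq_of_isClosed H (by rw [hb]; exact hπz) (by rw [hb]))
    have h1 : D.mapDomain b z = D ⟨π z.1, hπz⟩ :=
      (congrArg _ hbz.symm).trans (Finsupp.mapDomain_apply hinj D _)
    rw [h1, hD, ord_functionFieldMap_of_isUnramified π h (coheight_eq_one_of_isClosed hZ hz)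
      (coheight_eq_one_of_isClosed hT hπz) (map_maximalIdeal_stalkMap H _ hπz) hφ]
  · rw [Finsupp.mapDomain_of_notMem_range, ord_functionFieldMap_of_eq_genericPoint π h
      (coheight_eq_one_of_isClosed hZ hz) _ hφ]
    · by_contra hne
      exact hπz (isClosed_of_ne_genericPoint hT hne)
    · rintro ⟨t, rfl⟩
      exact hπz (by rw [hb]; exact mem_closedPoints_iff.1 t.2)

variable {X Y : Scheme.{u}} {f : X ⟶ Spec (.of k)} [LocallyOfFiniteType f] {a : Y ⟶ X} {r : Y ⟶ S}

/-- Push-forward commutes with base change. -/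
lemma pushforward_mapDomain (H : IsPullback π q p s) (HX : IsPullback a r f s) (g : T ⟶ X)
    [IsFinite g] (g' : Z ⟶ Y) [IsFinite g'] (hg : g ≫ f = p) (hg' : g' ≫ r = q)
    (hgg : g' ≫ a = π ≫ g) (b : closedPoints T → closedPoints Z)
    (hb : ∀ t, π (b t).1 = t.1) (b' : closedPoints X → closedPoints Y)
    (hb' : ∀ x, a (b' x).1 = x.1) (D : ZeroCycle T) :
    ZeroCycle.pushforward g' (D.mapDomain b) = (ZeroCycle.pushforward g D).mapDomain b' := by
  induction D using Finsupp.induction_linear with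
  | zero => simp
  | add D E hD hE => simp only [Finsupp.mapDomain_add, map_add, hD, hE]
  | single t n =>
    have ht := mem_closedPoints_iff.1 t.2
    have h1 : mapClosedPoint g' (b t) = b' (mapClosedPoint g t) := by
      apply Subtype.ext
      have hgt := mem_closedPoints_iff.1 (mapClosedPoint g t).2
      have : a (mapClosedPoint g' (b t)).1 = (mapClosedPoint g t).1 := by
        have := congr($hgg (b t).1)
        rw [Scheme.Hom.comp_apply, Scheme.Hom.comp_apply, hb] at this
        exact this
      refine eq_of_map_eq_of_isClosed HX (by rw [this]; exact hgt) (by rw [this, hb'])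
    rw [Finsupp.mapDomain_single, ZeroCycle.pushforward, ZeroCycle.pushforward,
      Finsupp.liftAddHom_apply_single, Finsupp.liftAddHom_apply_single,
      residueDegree_eq_one_of_isPullback H g' hg' _ (by rw [hb]; exact ht),
      residueDegree_eq_one_of_isClosed g hg _ ht, h1]
    simp

/-- Extension of the ground field preserves rational equivalence. -/
lemma mapDomain_mem_ratEquivZero [IsIntegral S] (HX : IsPullback a r f s)
    (b : closedPoints X → closedPoints Y) (hb : ∀ x, a (b x).1 = x.1)
    {c : ZeroCycle X} (hc : c ∈ ratEquivZero X) :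
    c.mapDomain b ∈ ratEquivZero Y := by
  suffices ratEquivZero X ≤ (ratEquivZero Y).comap (Finsupp.mapDomain.addMonoidHom b) from this hc
  rw [ratEquivZero, AddSubgroup.closure_le]
  rintro _ ⟨T, hT, hT', g, hg, φ, D, hdim, hφ, hD, rfl⟩
  have H : IsPullback (pullback.fst g a) (pullback.snd g a ≫ r) (g ≫ f) s :=
    (IsPullback.of_hasPullback g a).flip.paste_horiz HX.flip |>.flip
  have := isIntegral_of_isPullback H
  have := isLocallyNoetherian_of_isPullback H
  have := surjective_of_isPullback H
  choose b₁ hb₁ using exists_closedPoint_of_isPullback H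
  refine AddSubgroup.subset_closure ⟨pullback g a, inferInstance, inferInstance, pullback.snd g a,
    inferInstance, functionFieldMap (pullback.fst g a) (map_genericPoint_of_surjective _) φ,
    D.mapDomain b₁, topologicalKrullDim_of_isPullback H hdim, ?_,
    isDivisorOf_mapDomain H hdim _ hφ hD b₁ hb₁, ?_⟩
  · exact (map_ne_zero_iff _ (RingHom.injective _)).2 hφ
  · exact (pushforward_mapDomain H HX g (pullback.snd g a) rfl rfl pullback.condition.symm b₁ hb₁ b
      hb D).symm

lemma cls_eq_cls_of_isPullback [IsIntegral S] (HX : IsPullback a r f s)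
    {x x' : closedPoints X} (h : CH₀.cls x = CH₀.cls x')
    {y y' : closedPoints Y} (hy : a y.1 = x.1) (hy' : a y'.1 = x'.1) :
    CH₀.cls y = CH₀.cls y' := by
  choose b hb using exists_closedPoint_of_isPullback HX
  have key {x : closedPoints X} {y : closedPoints Y} (hy : a y.1 = x.1) : b x = y :=
    Subtype.ext (eq_of_map_eq_of_isClosed HX
      (by rw [hb]; exact mem_closedPoints_iff.1 x.2) (by rw [hb, hy]))
  rw [CH₀.cls, CH₀.cls, QuotientAddGroup.eq] at h ⊢
  have := mapDomain_mem_ratEquivZero HX b hb h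
  rwa [Finsupp.mapDomain_add, ← Finsupp.single_neg, Finsupp.mapDomain_single,
    Finsupp.mapDomain_single, key hy, key hy', Finsupp.single_neg] at this

end BaseChangeCycles

section ProjectiveLine

lemma mem_primeIdealOf_iff {Z : Scheme.{u}} {V : Z.Opens} (hV : IsAffineOpen V) (z : V)
    (r : Γ(Z, V)) : r ∈ (hV.primeIdealOf z).asIdeal ↔ z.1 ∉ Z.basicOpen r := by
  have h1 : hV.primeIdealOf z ∈ hV.fromSpec ⁻¹ᵁ Z.basicOpen r ↔ z.1 ∈ Z.basicOpen r := by
    rw [← hV.fromSpec_primeIdealOf z]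
    rfl
  rw [← h1, hV.fromSpec_preimage_basicOpen r]
  exact not_not.symm

/-- Data exhibiting the `k`-scheme `p : T ⟶ Spec k` as a projective line: affine coordinates `t` on
`U` and `w = t⁻¹` on `V`, and the rational point `c` at infinity with respect to `t`. -/
structure IsProjLine {k : Type u} [Field k] {T : Scheme.{u}} (p : T ⟶ Spec (.of k))
    {U V : T.Opens} (t : Γ(T, U)) (w : Γ(T, V)) (c : Spec (.of k) ⟶ T) : Prop where
  isAffineOpen_left : IsAffineOpen U
  isAffineOpen_right : IsAffineOpen V
  mem_or_mem : ∀ x : T, x ∈ U ∨ x ∈ V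
  adjoin_left : letI := (p.appLE ⊤ U (le_preimage_top p U)).hom.toAlgebra
    Algebra.adjoin Γ(Spec (.of k), ⊤) {t} = ⊤
  adjoin_right : letI := (p.appLE ⊤ V (le_preimage_top p V)).hom.toAlgebra
    Algebra.adjoin Γ(Spec (.of k), ⊤) {w} = ⊤
  germ_mul_germ : ∀ (x : T) (hU : x ∈ U) (hV : x ∈ V),
    T.presheaf.germ U x hU t * T.presheaf.germ V x hV w = 1
  basicOpen_le : T.basicOpen w ≤ U
  section_comp : c ≫ p = 𝟙 _
  section_notMem : ∀ a, c a ∉ U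

variable {k : Type u} [Field k] {S T Z : Scheme.{u}} [IsIntegral S] [Subsingleton S]
  {p : T ⟶ Spec (.of k)}
  {s : S ⟶ Spec (.of k)} {π : Z ⟶ T} {q : Z ⟶ S}

lemma ker_appLE_section (H : IsPullback π q p s) {U : T.Opens} (hU : IsAffineOpen U) {t : Γ(T, U)}
    (ht : letI := (p.appLE ⊤ U (le_preimage_top p U)).hom.toAlgebra
      Algebra.adjoin Γ(Spec (.of k), ⊤) {t} = ⊤)
    {σ : S ⟶ Z} (hσ : σ ≫ q = 𝟙 S) (e : ⊤ ≤ σ ⁻¹ᵁ π ⁻¹ᵁ U) :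
    RingHom.ker (σ.appLE (π ⁻¹ᵁ U) ⊤ e).hom =
    Ideal.span {π.appLE U (π ⁻¹ᵁ U) le_rfl t - q.appLE ⊤ (π ⁻¹ᵁ U) (le_preimage_top q _)
      (σ.appLE _ ⊤ e (π.appLE U (π ⁻¹ᵁ U) le_rfl t))} := by
  rw [ker_eq_span_of_isPushout (isPushout_of_isPullback H hU) (σ.appLE _ _ e)
    (appLE_comp_appLE_eq_id hσ _ _) {t} ht, Set.image_singleton]

lemma maximalIdeal_eq_span_germ
    (H : IsPullback π q p s) {U : T.Opens} (hU : IsAffineOpen U) {t : Γ(T, U)}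
    (ht : letI := (p.appLE ⊤ U (le_preimage_top p U)).hom.toAlgebra
      Algebra.adjoin Γ(Spec (.of k), ⊤) {t} = ⊤)
    {σ : S ⟶ Z} (hσ : σ ≫ q = 𝟙 S) (e : ⊤ ≤ σ ⁻¹ᵁ π ⁻¹ᵁ U) (y : S) :
    IsLocalRing.maximalIdeal (Z.presheaf.stalk (σ y)) =
    Ideal.span {Z.presheaf.germ (π ⁻¹ᵁ U) (σ y) (e trivial)
      (π.appLE U (π ⁻¹ᵁ U) le_rfl t - q.appLE ⊤ (π ⁻¹ᵁ U) (le_preimage_top q _)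
      (σ.appLE _ ⊤ e (π.appLE U (π ⁻¹ᵁ U) le_rfl t)))} := by
  have := isAffineHom_of_isPullback H
  rw [maximalIdeal_stalk_eq_map_ker σ (hU.preimage π) y (e trivial) e,
    ker_appLE_section H hU ht hσ e, Ideal.map_span, Set.image_singleton]

/-- The coordinate function `t - t(σ)` vanishes only along the section `σ`. -/
lemma eq_of_notMem_basicOpen
    (H : IsPullback π q p s) {U : T.Opens} (hU : IsAffineOpen U) {t : Γ(T, U)}
    (ht : letI := (p.appLE ⊤ U (le_preimage_top p U)).hom.toAlgebra
      Algebra.adjoin Γ(Spec (.of k), ⊤) {t} = ⊤)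
    {σ : S ⟶ Z} (hσ : σ ≫ q = 𝟙 S) (e : ⊤ ≤ σ ⁻¹ᵁ π ⁻¹ᵁ U) (y : S) {z : Z} (hz : π z ∈ U)
    (hz' : z ∉ Z.basicOpen (π.appLE U (π ⁻¹ᵁ U) le_rfl t -
      q.appLE ⊤ (π ⁻¹ᵁ U) (le_preimage_top q _)
        (σ.appLE _ ⊤ e (π.appLE U (π ⁻¹ᵁ U) le_rfl t)))) : z = σ y := by
  have := isAffineHom_of_isPullback H
  have hV := hU.preimage π
  have hχ : (RingHom.ker (σ.appLE (π ⁻¹ᵁ U) ⊤ e).hom).IsMaximal := by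
    let _ := (isField_of_isIntegral_of_subsingleton S).toField
    exact RingHom.ker_isMaximal_of_surjective (K := Γ(S, ⊤)) _ fun x =>
      ⟨q.appLE ⊤ (π ⁻¹ᵁ U) (le_preimage_top q _) x,
        congr($(appLE_comp_appLE_eq_id hσ (le_preimage_top q _) e) x)⟩
  have h1 : RingHom.ker (σ.appLE (π ⁻¹ᵁ U) ⊤ e).hom ≤ (hV.primeIdealOf ⟨z, hz⟩).asIdeal := by
    rw [ker_appLE_section H hU ht hσ e, Ideal.span_singleton_le_iff_mem, mem_primeIdealOf_iff]
    exact hz'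
  have h2 : RingHom.ker (σ.appLE (π ⁻¹ᵁ U) ⊤ e).hom =
      (hV.primeIdealOf ⟨σ y, e trivial⟩).asIdeal := by
    ext r
    rw [mem_primeIdealOf_iff, mem_basicOpen_iff_appLE_ne_zero σ y e, not_not]
    rfl
  have h3 := hχ.eq_of_le (hV.primeIdealOf ⟨z, hz⟩).2.ne_top h1
  rw [h2] at h3
  have h4 := hV.fromSpec_primeIdealOf ⟨z, hz⟩
  rw [← PrimeSpectrum.ext h3] at h4
  exact h4.symm.trans (hV.fromSpec_primeIdealOf ⟨σ y, e trivial⟩)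

end ProjectiveLine

section DivisorOnProjectiveLine

lemma germ_appLE {Z T : Scheme.{u}} (π : Z ⟶ T) {U : T.Opens} {W : Z.Opens} (e : W ≤ π ⁻¹ᵁ U)
    (z : Z) (hz : z ∈ W) (x : Γ(T, U)) :
    Z.presheaf.germ W z hz (π.appLE U W e x) =
      π.stalkMap z (T.presheaf.germ U (π z) (e hz) x) := by
  refine Eq.trans ?_ (Scheme.Hom.germ_stalkMap_apply π U z (e hz) x).symm
  rw [Scheme.Hom.appLE, CommRingCat.comp_apply]
  exact TopCat.Presheaf.germ_res_apply Z.presheaf (homOfLE e) z hz (π.app U x)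

lemma algebraMap_germ {Z : Scheme.{u}} [IsIntegral Z] {W : Z.Opens} (z : Z) (hz : z ∈ W)
    (x : Γ(Z, W)) : algebraMap (Z.presheaf.stalk z) Z.functionField (Z.presheaf.germ W z hz x) =
      Z.presheaf.germ W (genericPoint Z) ((genericPoint_specializes z).mem_open W.2 hz) x :=
  TopCat.Presheaf.germ_stalkSpecializes_apply Z.presheaf hz (genericPoint_specializes z) x

lemma ne_zero_of_maximalIdeal_eq_span {Z : Scheme.{u}} [IsIntegral Z] {z : Z}
    (hz : Order.coheight z = 1) {a : Z.presheaf.stalk z}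
    (h : IsLocalRing.maximalIdeal (Z.presheaf.stalk z) = Ideal.span {a}) : a ≠ 0 := by
  rintro rfl
  rw [Ideal.span_singleton_zero] at h
  have h1 := ringKrullDim_eq_zero_of_isField (IsLocalRing.isField_iff_maximalIdeal_eq.2 h)
  rw [ringKrullDim_stalk_eq_coheight, hz] at h1
  norm_num at h1

lemma ord_algebraMap_of_isUnit {Z : Scheme.{u}} [IsIntegral Z] [IsLocallyNoetherian Z] {z : Z}
    (hz : Order.coheight z = 1) {a : Z.presheaf.stalk z} (ha : IsUnit a) :
    Scheme.ord (algebraMap _ Z.functionField a) z = 0 := by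
  simpa using ord_algebraMap_stalk hz ha.ne_zero (n := 0) (Ring.ord_of_isUnit ha)

lemma ord_algebraMap_of_maximalIdeal_eq_span {Z : Scheme.{u}} [IsIntegral Z]
    [IsLocallyNoetherian Z] {z : Z} (hz : Order.coheight z = 1) {a : Z.presheaf.stalk z}
    (h : IsLocalRing.maximalIdeal (Z.presheaf.stalk z) = Ideal.span {a}) :
    Scheme.ord (algebraMap _ Z.functionField a) z = 1 := by
  simpa using ord_algebraMap_stalk hz (ne_zero_of_maximalIdeal_eq_span hz h) (n := 1)
    (by simpa using ord_eq_one_of_maximalIdeal_eq h)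

variable {k : Type u} [Field k] {S T Z : Scheme.{u}} [IsIntegral S] [Subsingleton S]
  {p : T ⟶ Spec (.of k)} {s : S ⟶ Spec (.of k)} {π : Z ⟶ T} {q : Z ⟶ S}
  {U V : T.Opens} {t : Γ(T, U)} {w : Γ(T, V)} {c : Spec (.of k) ⟶ T}

/-- At the points at infinity, `w` vanishes to first order, and nowhere else. -/
lemma IsProjLine.infinity (HP : IsProjLine p t w c) (H : IsPullback π q p s) {z : Z}
    (hz : π z ∉ U) : (∀ z', π z' ∉ U → z' = z) ∧
    IsLocalRing.maximalIdeal (Z.presheaf.stalk z) = Ideal.span {Z.presheaf.germ (π ⁻¹ᵁ V) z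
      ((HP.mem_or_mem (π z)).resolve_left hz) (π.appLE V (π ⁻¹ᵁ V) le_rfl w)} := by
  obtain ⟨y⟩ : Nonempty S := inferInstance
  have h₁ : s ≫ c ≫ p = 𝟙 S ≫ s := by rw [HP.section_comp]; simp
  let σ : S ⟶ Z := H.lift (s ≫ c) (𝟙 S) (by simpa using h₁)
  have hσπ : σ ≫ π = s ≫ c := H.lift_fst _ _ _
  have hσq : σ ≫ q = 𝟙 S := H.lift_snd _ _ _
  have hcV (a) : c a ∈ V := (HP.mem_or_mem _).resolve_left (HP.section_notMem a)
  have hπσ (y : S) : π (σ y) = c (s y) := congr($hσπ y)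
  have e : ⊤ ≤ σ ⁻¹ᵁ π ⁻¹ᵁ V := fun y _ => by
    change π (σ y) ∈ V
    rw [hπσ]; exact hcV _
  have hcw : c.appLE V ⊤ (fun a _ => hcV a) w = 0 := by
    by_contra h
    exact HP.section_notMem (s y) (HP.basicOpen_le
      ((mem_basicOpen_iff_appLE_ne_zero c (s y) (fun a _ => hcV a) w).2 h))
  have h0 : σ.appLE _ ⊤ e (π.appLE V (π ⁻¹ᵁ V) le_rfl w) = 0 := by
    refine (appLE_apply_appLE_apply σ π hσπ le_rfl e (fun a _ => hcV (s a)) w).trans ?_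
    refine (appLE_apply_appLE_apply s c rfl (B := ⊤) (fun a _ => hcV a)
      (le_preimage_top s ⊤) _ w).symm.trans ?_
    rw [hcw, map_zero]
  have key (z) (hz : π z ∉ U) : z = σ y := by
    refine eq_of_notMem_basicOpen H HP.isAffineOpen_right HP.adjoin_right hσq e y
      ((HP.mem_or_mem _).resolve_left hz) ?_
    rw [h0, map_zero, sub_zero, ← Scheme.Hom.app_eq_appLE, ← Scheme.Hom.preimage_basicOpen]
    exact fun h => hz (HP.basicOpen_le h)
  have hm := maximalIdeal_eq_span_germ H HP.isAffineOpen_right HP.adjoin_right hσq e y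
  rw [h0, map_zero, sub_zero] at hm
  refine ⟨fun z' hz' => (key z' hz').trans (key z hz).symm, ?_⟩
  obtain rfl := key z hz
  exact hm

lemma IsProjLine.exists_isDivisorOf (HP : IsProjLine p t w c) (H : IsPullback π q p s)
    [IsIntegral Z] [IsLocallyNoetherian Z] (hZ : topologicalKrullDim Z = 1) {σ : S ⟶ Z}
    (hσ : σ ≫ q = 𝟙 S) {y : S} {z₀ z₁ : closedPoints Z} (h₀ : σ y = z₀.1) (hU : z₀.1 ∈ π ⁻¹ᵁ U)
    (h₁ : π z₁.1 ∉ U) : ∃ φ : Z.functionField, φ ≠ 0 ∧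
      IsDivisorOf (Finsupp.single z₀ 1 - Finsupp.single z₁ 1) φ := by
  have hco (z : closedPoints Z) : Order.coheight z.1 = 1 :=
    coheight_eq_one_of_isClosed hZ (mem_closedPoints_iff.1 z.2)
  have e : ⊤ ≤ σ ⁻¹ᵁ π ⁻¹ᵁ U := top_le_preimage_of_mem σ (x := y) (by rw [h₀]; exact hU)
  let τ := σ.appLE _ ⊤ e (π.appLE U (π ⁻¹ᵁ U) le_rfl t)
  let ψ := π.appLE U (π ⁻¹ᵁ U) le_rfl t - q.appLE ⊤ (π ⁻¹ᵁ U) (le_preimage_top q _) τ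
  have hgU : genericPoint Z ∈ π ⁻¹ᵁ U := (genericPoint_specializes z₀.1).mem_open (π ⁻¹ᵁ U).2 hU
  have hz₁V : z₁.1 ∈ π ⁻¹ᵁ V := (HP.mem_or_mem _).resolve_left h₁
  have hgV : genericPoint Z ∈ π ⁻¹ᵁ V :=
    (genericPoint_specializes z₁.1).mem_open (π ⁻¹ᵁ V).2 hz₁V
  have hm₀ : IsLocalRing.maximalIdeal (Z.presheaf.stalk z₀.1) =
      Ideal.span {Z.presheaf.germ (π ⁻¹ᵁ U) z₀.1 hU ψ} := by
    have key : ∀ z (_ : σ y = z) (hz : z ∈ π ⁻¹ᵁ U),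
        IsLocalRing.maximalIdeal (Z.presheaf.stalk z) =
          Ideal.span {Z.presheaf.germ (π ⁻¹ᵁ U) z hz ψ} := by
      rintro _ rfl _
      exact maximalIdeal_eq_span_germ H HP.isAffineOpen_left HP.adjoin_left hσ e y
    exact key _ h₀ hU
  obtain ⟨hz₁, hm₁⟩ := HP.infinity H h₁
  let φ : Z.functionField := Z.presheaf.germ (π ⁻¹ᵁ U) (genericPoint Z) hgU ψ
  have hφ : φ ≠ 0 := by
    have := algebraMap_stalk_ne_zero (ne_zero_of_maximalIdeal_eq_span (hco z₀) hm₀)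
    rwa [algebraMap_germ z₀.1 hU ψ] at this
  classical
  refine ⟨φ, hφ, fun z => ?_⟩
  by_cases hz : z.1 ∈ π ⁻¹ᵁ U
  · have hne : z ≠ z₁ := by rintro rfl; exact h₁ hz
    have hφz : φ = algebraMap _ _ (Z.presheaf.germ (π ⁻¹ᵁ U) z.1 hz ψ) :=
      (algebraMap_germ _ _ _).symm
    rw [Finsupp.sub_apply, Finsupp.single_apply, Finsupp.single_eq_of_ne hne, sub_zero]
    split_ifs with h
    · subst h
      rw [hφz, ord_algebraMap_of_maximalIdeal_eq_span (hco _) hm₀]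
    · rw [hφz, ord_algebraMap_of_isUnit (hco _)]
      rw [← Scheme.mem_basicOpen _ _ _ hz]
      by_contra hb
      refine h (Subtype.ext ?_)
      rw [← h₀]
      exact (eq_of_notMem_basicOpen H HP.isAffineOpen_left HP.adjoin_left hσ e y hz hb).symm
  · obtain rfl : z = z₁ := Subtype.ext (hz₁ _ hz)
    have hne : z₀ ≠ z := by rintro rfl; exact hz hU
    rw [Finsupp.sub_apply, Finsupp.single_eq_of_ne hne.symm, Finsupp.single_eq_same]
    let a := Z.presheaf.germ (π ⁻¹ᵁ V) z.1 hz₁V (π.appLE V (π ⁻¹ᵁ V) le_rfl w)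
    let b := Z.presheaf.germ (π ⁻¹ᵁ V) z.1 hz₁V
      (q.appLE ⊤ (π ⁻¹ᵁ V) (le_preimage_top q _) τ)
    have hu : IsUnit (1 - b * a) := by
      have : b * a ∈ IsLocalRing.maximalIdeal (Z.presheaf.stalk z.1) :=
        Ideal.mul_mem_left _ _ (by rw [hm₁]; exact Ideal.mem_span_singleton_self _)
      by_contra h
      exact (IsLocalRing.maximalIdeal.isMaximal (Z.presheaf.stalk z.1)).ne_top
        ((Ideal.eq_top_iff_one _).2 <| by
          simpa using add_mem ((IsLocalRing.mem_maximalIdeal _).2 h) this)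
    have hmul : φ * algebraMap _ _ a = algebraMap _ Z.functionField (1 - b * a) := by
      have h2 := HP.germ_mul_germ (π (genericPoint Z)) hgU hgV
      have h3 := congrArg (π.stalkMap (genericPoint Z)) h2
      rw [map_mul, map_one, ← germ_appLE π le_rfl _ hgU, ← germ_appLE π le_rfl _ hgV] at h3
      rw [map_sub, map_mul, map_one, algebraMap_germ z.1 hz₁V, algebraMap_germ z.1 hz₁V]
      simp only [φ, ψ]
      rw [map_sub, sub_mul, h3, germ_appLE q, germ_appLE q]
    have h4 := congrArg (Scheme.ord · z.1) hmul
    rw [Scheme.ord_mul hφ (algebraMap_stalk_ne_zero (ne_zero_of_maximalIdeal_eq_span (hco z) hm₁)),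
      ord_algebraMap_of_maximalIdeal_eq_span (hco z) hm₁, ord_algebraMap_of_isUnit (hco _) hu] at h4
    linarith

end DivisorOnProjectiveLine

section Pushforward

lemma pushforward_single {Z Y : Scheme.{u}} (g : Z ⟶ Y) [IsFinite g]
    {z : closedPoints Z} (hz : g.residueDegree z.1 = 1) :
    ZeroCycle.pushforward g (Finsupp.single z 1) = Finsupp.single (mapClosedPoint g z) 1 := by
  rw [ZeroCycle.pushforward, Finsupp.liftAddHom_apply_single, hz]
  simp

variable {k : Type u} [Field k] [IsAlgClosed k] {S T X Y : Scheme.{u}} [IsIntegral S]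
  [Subsingleton S] {p : T ⟶ Spec (.of k)} {s : S ⟶ Spec (.of k)}
  {U V : T.Opens} {t : Γ(T, U)} {w : Γ(T, V)} {c : Spec (.of k) ⟶ T}
  {f : X ⟶ Spec (.of k)} [IsSeparated f] [LocallyOfFiniteType f] {a : Y ⟶ X} {r : Y ⟶ S}

/-- Any two rational points in the image of a projective line are rationally equivalent. -/
lemma IsProjLine.cls_eq_cls [IsIntegral T] [IsLocallyNoetherian T] (HP : IsProjLine p t w c)
    (hT : topologicalKrullDim T = 1) (g : T ⟶ X) [IsFinite g] (hg : g ≫ f = p)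
    (HX : IsPullback a r f s) {η : S ⟶ T} (hη : η ≫ p = s) {ρ : S ⟶ Y} (hρ : ρ ≫ r = 𝟙 S)
    (hρη : ρ ≫ a = η ≫ g) {y : S} (hy : η y ∈ U) {y₀ y₁ : closedPoints Y} (h₀ : ρ y = y₀.1)
    {b : Spec (.of k)} (h₁ : a y₁.1 = g (c b)) : CH₀.cls y₀ = CH₀.cls y₁ := by
  subst hg
  have : Nonempty (Spec (.of k)) := ⟨b⟩
  have : Subsingleton (Spec (.of k)) := inferInstanceAs (Subsingleton (PrimeSpectrum k))
  have H : IsPullback (pullback.fst g a) (pullback.snd g a ≫ r) (g ≫ f) s :=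
    (IsPullback.of_hasPullback g a).flip.paste_horiz HX.flip |>.flip
  have := isIntegral_of_isPullback H
  have := isLocallyNoetherian_of_isPullback H
  have hZ := topologicalKrullDim_of_isPullback H hT
  have : IsSeparated (pullback.snd g a ≫ r) :=
    MorphismProperty.of_isPullback H inferInstance
  let σ : S ⟶ pullback g a := H.lift η (𝟙 S) (by simpa using hη)
  have hσπ : σ ≫ pullback.fst g a = η := H.lift_fst _ _ _
  have hσq : σ ≫ pullback.snd g a ≫ r = 𝟙 S := H.lift_snd _ _ _
  have hσρ : σ ≫ pullback.snd g a = ρ := by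
    apply HX.hom_ext
    · rw [Category.assoc, ← pullback.condition, reassoc_of% hσπ, hρη]
    · rw [Category.assoc, hσq, hρ]
  let z₀ : closedPoints ↑(pullback g a) := closedPointOfSection (pullback.snd g a ≫ r) σ hσq
  have hσz₀ : σ y = z₀.1 := congrArg σ (Subsingleton.elim _ _)
  let t₁ : closedPoints T := closedPointOfSection (g ≫ f) c HP.section_comp
  have ht₁ : c b = t₁.1 := congrArg c (Subsingleton.elim _ _)
  obtain ⟨z₁, hz₁⟩ := exists_closedPoint_of_isPullback H t₁
  obtain ⟨φ, hφ, hD⟩ := HP.exists_isDivisorOf H hZ hσq (z₁ := z₁) hσz₀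
    (show pullback.fst g a z₀.1 ∈ U by
      rw [← hσz₀, ← Scheme.Hom.comp_apply, hσπ]; exact hy)
    (by rw [hz₁, ← ht₁]; exact HP.section_notMem b)
  have h2 : ZeroCycle.pushforward (pullback.snd g a)
      (Finsupp.single z₀ 1 - Finsupp.single z₁ 1) ∈ ratEquivZero Y :=
    AddSubgroup.subset_closure ⟨_, inferInstance, inferInstance, _, inferInstance, φ, _, hZ, hφ,
      hD, rfl⟩
  have e₀ : mapClosedPoint (pullback.snd g a) z₀ = y₀ := by
    refine Subtype.ext ?_
    rw [← h₀, ← hσρ, Scheme.Hom.comp_apply, hσz₀]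
    rfl
  have e₁ : mapClosedPoint (pullback.snd g a) z₁ = y₁ := by
    have h3 : a (pullback.snd g a z₁.1) = a y₁.1 := by
      rw [h₁, ht₁, ← hz₁, ← Scheme.Hom.comp_apply, ← Scheme.Hom.comp_apply, pullback.condition]
    refine Subtype.ext (eq_of_map_eq_of_isClosed HX ?_ h3)
    refine (congrArg (fun x : X => IsClosed {x}) (h3.trans (h₁.trans (congrArg g ht₁)))).mpr ?_
    exact mem_closedPoints_iff.1 (mapClosedPoint g t₁).2
  rw [map_sub, pushforward_single _ (by rw [← hσz₀]; exact residueDegree_eq_one _ rfl hσq y),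
    pushforward_single _ (residueDegree_eq_one_of_isPullback H _ rfl _
      (by rw [hz₁]; exact mem_closedPoints_iff.1 t₁.2)), e₀, e₁] at h2
  rw [CH₀.cls, CH₀.cls, eq_comm, QuotientAddGroup.eq, neg_add_eq_sub]
  exact h2

end Pushforward

section DimensionOfProjectiveLine

lemma ringKrullDim_le_one_of_adjoin_eq_top {K A : Type*} [CommRing K] [CommRing A] [Algebra K A]
    (hK : IsField K) {t : A} (h : Algebra.adjoin K {t} = ⊤) : ringKrullDim A ≤ 1 := by
  let _ := hK.toField
  rw [Algebra.adjoin_singleton_eq_range_aeval, AlgHom.range_eq_top] at h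
  refine (ringKrullDim_le_of_surjective (Polynomial.aeval t).toRingHom h).trans ?_
  rw [Polynomial.ringKrullDim_of_isNoetherianRing, ringKrullDim_eq_zero_of_isField hK, zero_add]

lemma IsProjLine.topologicalKrullDim_eq_one {k : Type u} [Field k] {T : Scheme.{u}} [IsIntegral T]
    {p : T ⟶ Spec (.of k)} {U V : T.Opens} {t : Γ(T, U)} {w : Γ(T, V)} {c : Spec (.of k) ⟶ T}
    (HP : IsProjLine p t w c) {x : T} (hx : x ∈ U) : topologicalKrullDim T = 1 := by
  have : Subsingleton (Spec (.of k)) := inferInstanceAs (Subsingleton (PrimeSpectrum k))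
  have hK : IsField Γ(Spec (.of k), ⊤) := isField_of_isIntegral_of_subsingleton _
  refine K3CCC.topologicalKrullDim_eq_one (fun z => ?_) ?_
  · have key : (Order.coheight z : WithBot ℕ∞) ≤ 1 := by
      rcases HP.mem_or_mem z with hz | hz
      · algebraize [(p.appLE ⊤ U (le_preimage_top p U)).hom]
        exact (coheight_le_ringKrullDim HP.isAffineOpen_left hz).trans
          (ringKrullDim_le_one_of_adjoin_eq_top hK HP.adjoin_left)
      · algebraize [(p.appLE ⊤ V (le_preimage_top p V)).hom]
        exact (coheight_le_ringKrullDim HP.isAffineOpen_right hz).trans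
          (ringKrullDim_le_one_of_adjoin_eq_top hK HP.adjoin_right)
    exact_mod_cast key
  · obtain ⟨b⟩ : Nonempty (Spec (.of k)) := inferInstance
    refine ⟨c b, fun h => HP.section_notMem b ?_⟩
    rw [h]
    exact (genericPoint_specializes x).mem_open U.2 hx

end DimensionOfProjectiveLine

section CoordinatesOnProj

open HomogeneousLocalization

lemma Proj.ι_toSpecZero {σ A : Type u} [CommRing A] [SetLike σ A] [AddSubgroupClass σ A]
    (𝒜 : ℕ → σ) [GradedRing 𝒜] {f : A} {m : ℕ} (hf : f ∈ 𝒜 m) (hm : 0 < m) :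
    (Proj.basicOpen 𝒜 f).ι ≫ Proj.toSpecZero 𝒜 = (Proj.basicOpen 𝒜 f).toSpecΓ ≫
      Spec.map (CommRingCat.ofHom (fromZeroRingHom 𝒜 (.powers f)) ≫ Proj.awayToSection 𝒜 f) := by
  have h := Proj.awayι_toSpecZero 𝒜 f hf hm
  rw [Proj.awayι, Category.assoc, Iso.inv_comp_eq, Proj.basicOpenIsoSpec_hom,
    Proj.basicOpenToSpec, Category.assoc, ← Spec.map_comp] at h
  exact h

lemma appLE_eq_of_ι_comp_eq {T : Scheme.{u}} {R : CommRingCat.{u}} (p : T ⟶ Spec R) {U : T.Opens}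
    {φ : R ⟶ Γ(T, U)} (h : U.ι ≫ p = U.toSpecΓ ≫ Spec.map φ) :
    p.appLE ⊤ U (le_preimage_top p U) = (Scheme.ΓSpecIso R).hom ≫ φ := by
  have h1 := congrArg Scheme.Hom.appTop h
  rw [Scheme.Hom.comp_appTop, Scheme.Hom.comp_appTop, Scheme.Opens.toSpecΓ_appTop,
    Scheme.ΓSpecIso_naturality_assoc] at h1
  rw [← Category.assoc, Iso.eq_comp_inv, Category.assoc] at h1
  rw [← h1, Scheme.Opens.ι_appTop, Scheme.Opens.topIso_hom]
  exact congrArg (p.app ⊤ ≫ ·) (T.presheaf.map_comp _ _)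

/-- In `Proj`, the complement of the hypersurface `g = 0` is the non-vanishing locus of the
function `g ^ m / f ^ n` within `f ≠ 0`. -/
lemma Proj.basicOpen_awayToSection_le {σ A : Type u} [CommRing A] [SetLike σ A]
    [AddSubgroupClass σ A] (𝒜 : ℕ → σ) [GradedRing 𝒜] {f : A} {m : ℕ} (hf : f ∈ 𝒜 m) (hm : 0 < m)
    {g : A} {n : ℕ} (hg : g ∈ 𝒜 n) (hn : 0 < n) :
    (Proj 𝒜).basicOpen (Proj.awayToSection 𝒜 f (Away.isLocalizationElem hf hg)) ≤
      Proj.basicOpen 𝒜 g := by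
  have h := Proj.awayι_preimage_basicOpen 𝒜 hf hm hg hn
  have h2 := congrArg ((Proj.basicOpenIsoSpec 𝒜 f hf hm).hom ⁻¹ᵁ ·) h
  simp only [← Scheme.Hom.comp_preimage, Proj.awayι, Iso.hom_inv_id_assoc] at h2
  rw [Proj.basicOpenIsoSpec_hom, Proj.basicOpenToSpec] at h2
  intro x hx
  have hxf : x ∈ Proj.basicOpen 𝒜 f := (Proj 𝒜).basicOpen_le _ hx
  change (⟨x, hxf⟩ : Proj.basicOpen 𝒜 f) ∈ (Proj.basicOpen 𝒜 f).ι ⁻¹ᵁ Proj.basicOpen 𝒜 g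
  rw [h2]
  have h3 := Scheme.Opens.toSpecΓ_preimage_basicOpen _
    (Proj.awayToSection 𝒜 f (Away.isLocalizationElem hf hg))
  exact h3.ge (show (⟨x, hxf⟩ : Proj.basicOpen 𝒜 f) ∈ _ from hx)

lemma Proj.germ_awayToSection_mul_germ {σ A : Type u} [CommRing A] [SetLike σ A]
    [AddSubgroupClass σ A] (𝒜 : ℕ → σ) [GradedRing 𝒜] {f g : A} {m : ℕ} (hf : f ∈ 𝒜 m)
    (hg : g ∈ 𝒜 m) (x : Proj 𝒜) (hxf : x ∈ Proj.basicOpen 𝒜 f) (hxg : x ∈ Proj.basicOpen 𝒜 g) :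
    (Proj 𝒜).presheaf.germ _ x hxf (Proj.awayToSection 𝒜 f (Away.isLocalizationElem hf hg)) *
      (Proj 𝒜).presheaf.germ _ x hxg (Proj.awayToSection 𝒜 g (Away.isLocalizationElem hg hf)) =
      1 := by
  have hx : x ∈ Proj.basicOpen 𝒜 (f * g) := by rw [Proj.basicOpen_mul]; exact ⟨hxf, hxg⟩
  have h1 := congr($(Proj.awayMap_awayToSection 𝒜 hg rfl) (Away.isLocalizationElem hf hg))
  have h2 := congr($(Proj.awayMap_awayToSection 𝒜 hf (mul_comm f g))
    (Away.isLocalizationElem hg hf))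
  rw [CommRingCat.comp_apply, CommRingCat.comp_apply] at h1 h2
  have h3 := congrArg ((Proj 𝒜).presheaf.germ _ x hx) h1
  have h4 := congrArg ((Proj 𝒜).presheaf.germ _ x hx) h2
  rw [TopCat.Presheaf.germ_res_apply] at h3 h4
  have h5 : awayMap 𝒜 hg rfl (Away.isLocalizationElem hf hg) *
      awayMap 𝒜 hf (mul_comm f g) (Away.isLocalizationElem hg hf) = 1 := by
    apply val_injective
    rw [val_mul, val_one, awayMap_mk, awayMap_mk, Away.val_mk, Away.val_mk, Localization.mk_mul,
      ← Localization.mk_one, Localization.mk_eq_mk_iff]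
    apply Localization.r_of_eq
    simp only [Submonoid.coe_one, Submonoid.mk_mul_mk]
    ring
  rw [← h3, ← h4, ← map_mul, ← map_mul]
  refine (congrArg _ (congrArg _ h5)).trans ?_
  rw [map_one, map_one]

end CoordinatesOnProj

section ProjectiveLineModel

open HomogeneousLocalization

attribute [local instance] MvPolynomial.gradedAlgebra

lemma X_mem_homogeneousSubmodule {n : ℕ} (k : Type u) [Field k] (i : Fin n) :
    (MvPolynomial.X i : MvPolynomial (Fin n) k) ∈ MvPolynomial.homogeneousSubmodule (Fin n) k 1 :=
  MvPolynomial.isHomogeneous_X k i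

lemma exists_algebraMap_eq_of_mem_zero {n : ℕ} (k : Type u) [Field k]
    (a : MvPolynomial.homogeneousSubmodule (Fin n) k 0) : ∃ r : k, algebraMap k _ r = a := by
  obtain ⟨a, ha⟩ := a
  rw [MvPolynomial.homogeneousSubmodule_zero] at ha
  obtain ⟨r, rfl⟩ := Submodule.mem_one.1 ha
  exact ⟨r, rfl⟩

instance (n : ℕ) (k : Type u) [Field k] : IsScalarTower k
    (MvPolynomial.homogeneousSubmodule (Fin n) k 0) (MvPolynomial (Fin n) k) :=
  ⟨fun r a x => smul_mul_assoc r a.1 x⟩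

lemma adjoin_range_X_eq_top {n : ℕ} (k : Type u) [Field k] :
    Algebra.adjoin (MvPolynomial.homogeneousSubmodule (Fin n) k 0)
      (Set.range (MvPolynomial.X : Fin n → MvPolynomial (Fin n) k)) = ⊤ := by
  rw [eq_top_iff]
  intro x _
  have : x ∈ (Algebra.adjoin (MvPolynomial.homogeneousSubmodule (Fin n) k 0)
      (Set.range (MvPolynomial.X : Fin n → MvPolynomial (Fin n) k))).restrictScalars k := by
    have h := MvPolynomial.adjoin_range_X (R := k) (σ := Fin n)
    have h2 : Algebra.adjoin k (Set.range MvPolynomial.X) ≤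
      (Algebra.adjoin (MvPolynomial.homogeneousSubmodule (Fin n) k 0)
      (Set.range (MvPolynomial.X : Fin n → MvPolynomial (Fin n) k))).restrictScalars k :=
      Algebra.adjoin_le Algebra.subset_adjoin
    rw [h] at h2
    exact h2 trivial
  exact this

instance (n : ℕ) (k : Type u) [Field k] : LocallyOfFiniteType (projSpaceStr n k) := by
  have : Algebra.FiniteType (MvPolynomial.homogeneousSubmodule (Fin (n + 1)) k 0)
      (MvPolynomial (Fin (n + 1)) k) := Algebra.FiniteType.of_restrictScalars_finiteType k _ _
  have h : LocallyOfFiniteType (Spec.map (CommRingCat.ofHom (algebraMap k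
      (MvPolynomial.homogeneousSubmodule (Fin (n + 1)) k 0)))) := by
    rw [HasRingHomProperty.Spec_iff (P := @LocallyOfFiniteType)]
    exact RingHom.FiniteType.of_surjective _ (exists_algebraMap_eq_of_mem_zero k)
  exact MorphismProperty.comp_mem _ _ _ (inferInstance : LocallyOfFiniteType (Proj.toSpecZero _)) h

/-- The homogeneous coordinate ring of the projective line, with its grading. -/
abbrev gradingP1 (k : Type u) [Field k] : ℕ → Submodule k (MvPolynomial (Fin (1 + 1)) k) :=
  MvPolynomial.homogeneousSubmodule (Fin (1 + 1)) k

variable (k : Type u) [Field k] {i j : Fin 2}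

/-- The coordinate `x_j / x_i` on the standard open subset `x_i ≠ 0` of the projective line. -/
noncomputable def coord (i j : Fin 2) :
    Γ(projSpace 1 k, Proj.basicOpen (gradingP1 k) (MvPolynomial.X i)) :=
  Proj.awayToSection (gradingP1 k) _ (Away.isLocalizationElem (X_mem_homogeneousSubmodule k i)
    (X_mem_homogeneousSubmodule k j))

lemma appLE_projSpaceStr (i : Fin 2) : (projSpaceStr 1 k).appLE ⊤
    (Proj.basicOpen (gradingP1 k) (MvPolynomial.X i)) (le_preimage_top _ _) =
    (Scheme.ΓSpecIso (.of k)).hom ≫ CommRingCat.ofHom (algebraMap k (gradingP1 k 0)) ≫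
      CommRingCat.ofHom (fromZeroRingHom (gradingP1 k) (.powers (MvPolynomial.X i))) ≫
        Proj.awayToSection (gradingP1 k) (MvPolynomial.X i) := by
  refine appLE_eq_of_ι_comp_eq (projSpaceStr 1 k) ?_
  have := Proj.ι_toSpecZero (gradingP1 k) (X_mem_homogeneousSubmodule k i) one_pos
  rw [projSpaceStr]
  refine (reassoc_of% this) _ |>.trans ?_
  rw [← Spec.map_comp]
  rfl

lemma mk_prod_pow_eq (hij : i ≠ j) (a : ℕ) (e : Fin 2 → ℕ) (h : ∑ l, e l • 1 = a • 1)
    (h' : ∏ l, MvPolynomial.X l ^ e l ∈ (gradingP1 k) (a • 1)) :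
    Away.mk (gradingP1 k) (X_mem_homogeneousSubmodule k i) a (∏ l, MvPolynomial.X l ^ e l) h' =
      (Away.isLocalizationElem (X_mem_homogeneousSubmodule k i)
        (X_mem_homogeneousSubmodule k j)) ^ e j := by
  apply val_injective
  rw [val_pow, Away.val_mk, Away.val_mk, Localization.mk_pow, Localization.mk_eq_mk_iff]
  apply Localization.r_of_eq
  simp only [smul_eq_mul, mul_one, SubmonoidClass.mk_pow, pow_one] at h ⊢
  subst h
  fin_cases i <;> fin_cases j <;> simp_all [Fin.prod_univ_two, Fin.sum_univ_two] <;> ring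

lemma mem_of_isLocalizationElem_mem (hij : i ≠ j)
    (B : Subring (Away (gradingP1 k) (MvPolynomial.X i)))
    (h₀ : ∀ r : k,
      fromZeroRingHom (gradingP1 k) (.powers (MvPolynomial.X i)) (algebraMap k _ r) ∈ B)
    (h₁ : Away.isLocalizationElem (X_mem_homogeneousSubmodule k i)
      (X_mem_homogeneousSubmodule k j) ∈ B) (y) : y ∈ B := by
  have hy : y ∈ Submodule.span (gradingP1 k 0) _ :=
    (Away.span_mk_prod_pow_eq_top (X_mem_homogeneousSubmodule k i) MvPolynomial.X
      (adjoin_range_X_eq_top k) (fun _ => 1) (X_mem_homogeneousSubmodule k)).ge trivial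
  induction hy using Submodule.span_induction with
  | zero => exact zero_mem _
  | add y z _ _ hy hz => exact add_mem hy hz
  | smul r y _ hy =>
    obtain ⟨r, rfl⟩ := exists_algebraMap_eq_of_mem_zero k r
    rw [Algebra.smul_def]
    exact mul_mem (h₀ r) hy
  | mem y hy =>
    obtain ⟨a, e, he, rfl⟩ := hy
    rw [mk_prod_pow_eq k hij a e he]
    exact pow_mem h₁ _

lemma adjoin_coord (hij : i ≠ j) :
    letI := ((projSpaceStr 1 k).appLE ⊤ (Proj.basicOpen (gradingP1 k) (MvPolynomial.X i))
      (le_preimage_top _ _)).hom.toAlgebra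
    Algebra.adjoin Γ(Spec (.of k), ⊤) {coord k i j} = ⊤ := by
  let _ := ((projSpaceStr 1 k).appLE ⊤ (Proj.basicOpen (gradingP1 k) (MvPolynomial.X i))
      (le_preimage_top _ _)).hom.toAlgebra
  rw [eq_top_iff]
  intro x _
  obtain ⟨y, rfl⟩ : ∃ y, Proj.awayToSection (gradingP1 k) (MvPolynomial.X i) y = x :=
    (ConcreteCategory.bijective_of_isIso
      (Proj.basicOpenIsoAway (gradingP1 k) _ (X_mem_homogeneousSubmodule k i) one_pos).hom).2 x
  refine mem_of_isLocalizationElem_mem k hij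
    ((Algebra.adjoin Γ(Spec (.of k), ⊤) {coord k i j}).toSubring.comap
      (Proj.awayToSection (gradingP1 k) (MvPolynomial.X i)).hom) (fun r => ?_)
    (Algebra.subset_adjoin (R := Γ(Spec (.of k), ⊤)) (Set.mem_singleton (coord k i j))) y
  have h := congr($(appLE_projSpaceStr k i) ((Scheme.ΓSpecIso (.of k)).inv r))
  simp only [CommRingCat.comp_apply] at h
  have h2 : (Scheme.ΓSpecIso (.of k)).hom ((Scheme.ΓSpecIso (.of k)).inv r) = r :=
    congr($((Scheme.ΓSpecIso (.of k)).inv_hom_id) r)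
  rw [h2] at h
  exact h.subst (motive := (· ∈ Algebra.adjoin Γ(Spec (.of k), ⊤) {coord k i j}))
    (Subalgebra.algebraMap_mem _ _)

/-- The value at the coordinate point `x_j = 1` of a function on the standard open subset `x_j ≠ 0`
of the projective line. -/
noncomputable def evalVertex (j : Fin 2) : Away (gradingP1 k) (MvPolynomial.X j) →+* k :=
  (IsLocalization.Away.lift (S := Localization.Away (MvPolynomial.X j : MvPolynomial (Fin 2) k))
    (MvPolynomial.X j) (g := (MvPolynomial.eval (Pi.single j (1 : k))))
    (by simp)).comp (algebraMap _ _)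

lemma evalVertex_mk (n : ℕ) (a : MvPolynomial (Fin 2) k) (ha : a ∈ (gradingP1 k) (n • 1)) :
    evalVertex k j (Away.mk (gradingP1 k) (X_mem_homogeneousSubmodule k j) n a ha) =
      MvPolynomial.eval (Pi.single j (1 : k)) a := by
  rw [evalVertex, RingHom.comp_apply, HomogeneousLocalization.algebraMap_apply, Away.val_mk,
    Localization.mk_eq_mk', IsLocalization.Away.lift, IsLocalization.lift_mk'_spec]
  simp

lemma evalVertex_comp : (evalVertex k j).comp
    ((fromZeroRingHom (gradingP1 k) (.powers (MvPolynomial.X j))).comp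
      (algebraMap k (gradingP1 k 0))) =
      RingHom.id k := by
  ext r
  have : fromZeroRingHom (gradingP1 k) (.powers (MvPolynomial.X j))
      (algebraMap k (gradingP1 k 0) r) =
      Away.mk (gradingP1 k) (X_mem_homogeneousSubmodule k j) 0 (MvPolynomial.C r)
        (by simp) := by
    apply val_injective
    rw [Away.val_mk]
    simp only [pow_zero]
    rfl
  rw [RingHom.comp_apply, RingHom.comp_apply, this, evalVertex_mk]
  simp

/-- The coordinate point `x_j = 1` of the projective line. -/
noncomputable def vertex (j : Fin 2) : Spec (.of k) ⟶ projSpace 1 k :=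
  Spec.map (CommRingCat.ofHom (evalVertex k j)) ≫
    Proj.awayι (gradingP1 k) _ (X_mem_homogeneousSubmodule k j) one_pos

lemma vertex_comp (j : Fin 2) : vertex k j ≫ projSpaceStr 1 k = 𝟙 _ := by
  have h := Proj.awayι_toSpecZero (gradingP1 k) _ (X_mem_homogeneousSubmodule k j) one_pos
  refine (Category.assoc _ _ _).trans ?_
  refine (congrArg (_ ≫ ·) ((reassoc_of% h) _)).trans ?_
  rw [← Spec.map_comp, ← Spec.map_comp, ← CommRingCat.ofHom_comp, ← CommRingCat.ofHom_comp]
  refine (congrArg (fun φ => Spec.map (CommRingCat.ofHom φ)) (evalVertex_comp k)).trans ?_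
  exact Spec.map_id _

lemma vertex_notMem (hij : i ≠ j) (b : Spec (.of k)) :
    vertex k j b ∉ Proj.basicOpen (gradingP1 k) (MvPolynomial.X i) := by
  intro h
  have h1 : Spec.map (CommRingCat.ofHom (evalVertex k j)) b ∈
      Proj.awayι (gradingP1 k) _ (X_mem_homogeneousSubmodule k j) one_pos ⁻¹ᵁ
        Proj.basicOpen (gradingP1 k) (MvPolynomial.X i) := h
  rw [Proj.awayι_preimage_basicOpen (gradingP1 k) (X_mem_homogeneousSubmodule k j) one_pos
    (X_mem_homogeneousSubmodule k i) one_pos] at h1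
  apply h1
  change evalVertex k j _ ∈ b.asIdeal
  rw [evalVertex_mk]
  simp [hij]

lemma mem_basicOpen_or_mem_basicOpen (hij : i ≠ j) (x : projSpace 1 k) :
    x ∈ Proj.basicOpen (gradingP1 k) (MvPolynomial.X i) ∨
      x ∈ Proj.basicOpen (gradingP1 k) (MvPolynomial.X j) := by
  have h := Proj.iSup_basicOpen_eq_top' (gradingP1 k) (MvPolynomial.X)
    (fun i => ⟨1, X_mem_homogeneousSubmodule k i⟩) (adjoin_range_X_eq_top k)
  obtain ⟨l, hl⟩ := TopologicalSpace.Opens.mem_iSup.1 (h.ge (trivial : x ∈ ⊤))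
  have : l = i ∨ l = j := by omega
  rcases this with rfl | rfl
  · exact .inl hl
  · exact .inr hl

/-- The standard coordinates on the projective line. -/
lemma isProjLine (hij : i ≠ j) :
    IsProjLine (projSpaceStr 1 k) (coord k i j) (coord k j i) (vertex k j) where
  isAffineOpen_left :=
    Proj.isAffineOpen_basicOpen (gradingP1 k) _ (X_mem_homogeneousSubmodule k i) one_pos
  isAffineOpen_right :=
    Proj.isAffineOpen_basicOpen (gradingP1 k) _ (X_mem_homogeneousSubmodule k j) one_pos
  mem_or_mem := mem_basicOpen_or_mem_basicOpen k hij
  adjoin_left := adjoin_coord k hij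
  adjoin_right := adjoin_coord k hij.symm
  germ_mul_germ := Proj.germ_awayToSection_mul_germ (gradingP1 k) (X_mem_homogeneousSubmodule k i)
    (X_mem_homogeneousSubmodule k j)
  basicOpen_le :=
    Proj.basicOpen_awayToSection_le (gradingP1 k) (X_mem_homogeneousSubmodule k j) one_pos
    (X_mem_homogeneousSubmodule k i) one_pos
  section_comp := vertex_comp k j
  section_notMem := vertex_notMem k hij

end ProjectiveLineModel

section IntegralComponent

/-- The scheme-theoretic image of an integral scheme is integral. -/
lemma isIntegral_image {X Y : Scheme.{u}} (f : X ⟶ Y) [QuasiCompact f] [IsIntegral X] :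
    IsIntegral f.image := by
  have h1 : f.toImage.ker = ⊥ := by
    refine Scheme.IdealSheafData.ext_of_iSup_eq_top
      (fun U : Y.affineOpens => ⟨f.imageι ⁻¹ᵁ U.1, U.2.preimage _⟩)
      (TopologicalSpace.IsOpenCover.comap (iSup_affineOpens_eq_top _) _) fun U => ?_
    rw [Scheme.Hom.ker_apply, Scheme.IdealSheafData.ideal_bot, Pi.bot_apply,
      ← RingHom.injective_iff_ker_eq_bot]
    exact f.toImage_app_injective U
  have : IsSchemeTheoreticallyDominant f.toImage := ⟨h1⟩
  have := IsSchemeTheoreticallyDominant.isReduced f.toImage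
  have : IrreducibleSpace f.image := by
    rw [irreducibleSpace_def, Set.top_eq_univ, ← f.toImage.denseRange.closure_range,
      ← Set.image_univ]
    exact ((IrreducibleSpace.isIrreducible_univ X).image _
      f.toImage.continuous.continuousOn).closure
  exact isIntegral_of_irreducibleSpace_of_isReduced _

lemma exists_isIntegralComponent (C : Scheme.{u}) [QuasiSeparatedSpace C] [Nonempty C] :
    ∃ (W : Scheme.{u}) (j : W ⟶ C), IsIntegralComponent j := by
  obtain ⟨x⟩ : Nonempty C := inferInstance
  have hZ := irreducibleComponent_mem_irreducibleComponents x
  have hirr := isIrreducible_irreducibleComponent (x := x)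
  let h := C.fromSpecResidueField hirr.genericPoint
  have := isIntegral_image h
  refine ⟨h.image, h.imageι, inferInstance, inferInstance, ?_⟩
  rw [Scheme.IdealSheafData.range_subschemeι, Scheme.Hom.support_ker,
    Scheme.range_fromSpecResidueField, hirr.genericPoint_closure_eq,
    isClosed_irreducibleComponent.closure_eq]
  exact hZ

end IntegralComponent

section Kappa

attribute [local instance] MvPolynomial.gradedAlgebra

variable {k : Type u} [Field k] [IsAlgClosed k] {X W : Scheme.{u}} (f : X ⟶ Spec (.of k))
  [IsSeparated f] [LocallyOfFiniteType f] [IsIntegral W] (ι : W ⟶ X)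

lemma fst_constantPoint (x : closedPoints X) :
    pullback.fst f (genericPointStr (ι ≫ f)) (constantPoint f ι x).1 = x.1 := by
  refine (Scheme.Hom.comp_apply _ _ _).symm.trans ?_
  rw [pullback.lift_fst, Scheme.Hom.comp_apply, pointOfClosedPoint_apply]

/-- If the normalization of `W ⊂ X` is a projective line and `x₀` is rationally equivalent to the
closed points of `W`, then `κ_W = 0`. -/
lemma kappa_eq_zero [IsClosedImmersion ι] (hW : HasNormalizationP1 (ι ≫ f)) (x₀ : closedPoints X)
    (hx₀ : ∀ x : closedPoints X, x.1 ∈ Set.range ι → CH₀.cls x = CH₀.cls x₀) :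
    kappa f ι x₀ = 0 := by
  have : QuasiSeparatedSpace W :=
    (quasiSeparated_iff_quasiSeparatedSpace (ι ≫ f)).1 inferInstance
  obtain ⟨e, he⟩ := hW
  let n := (genericPointInclusion W).fromNormalization
  let g : projSpace 1 k ⟶ X := e.inv ≫ n ≫ ι
  have hg : g ≫ f = projSpaceStr 1 k := by
    rw [Category.assoc, Category.assoc, ← he, Iso.inv_hom_id_assoc]
  have : LocallyOfFiniteType g := by
    have : LocallyOfFiniteType (g ≫ f) := by rw [hg]; infer_instance
    exact locallyOfFiniteType_of_comp g f
  have : IsFinite g :=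
    (IsFinite.iff_isIntegralHom_and_locallyOfFiniteType g).2 ⟨inferInstance, inferInstance⟩
  let y : Spec W.functionField := Classical.arbitrary _
  let η : Spec W.functionField ⟶ projSpace 1 k :=
    (genericPointInclusion W).toNormalization ≫ e.hom
  have hη : η ≫ g = genericPointInclusion W ≫ ι := by simp [η, g, n]
  have : Nonempty (projSpace 1 k) := ⟨η y⟩
  have : IsIntegral (projSpace 1 k) := isIntegral_of_isOpenImmersion e.inv
  have : IsLocallyNoetherian (projSpace 1 k) :=
    LocallyOfFiniteType.isLocallyNoetherian (projSpaceStr 1 k)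
  have : Subsingleton (Spec (.of k)) := inferInstanceAs (Subsingleton (PrimeSpectrum k))
  have HX := IsPullback.of_hasPullback f (genericPointStr (ι ≫ f))
  obtain ⟨i, j, hij, hy⟩ : ∃ i j : Fin 2, i ≠ j ∧
      η y ∈ Proj.basicOpen (gradingP1 k) (MvPolynomial.X i) := by
    rcases mem_basicOpen_or_mem_basicOpen k zero_ne_one (η y) with h | h
    · exact ⟨0, 1, zero_ne_one, h⟩
    · exact ⟨1, 0, one_ne_zero, h⟩
  have HP := isProjLine k hij
  let x₁ : closedPoints X :=
    mapClosedPoint g (closedPointOfSection (projSpaceStr 1 k) (vertex k j) (vertex_comp k j))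
  have h₁ : CH₀.cls (graphPoint f ι) = CH₀.cls (constantPoint f ι x₁) :=
    HP.cls_eq_cls (HP.topologicalKrullDim_eq_one hy) g hg HX (η := η)
      (by rw [← hg, reassoc_of% hη]; rfl) (pullback.lift_snd _ _ _)
      (by rw [pullback.lift_fst, hη]) hy rfl (fst_constantPoint f ι x₁)
  have h₂ : CH₀.cls x₁ = CH₀.cls x₀ := hx₀ x₁ ⟨n (e.inv _), rfl⟩
  rw [kappa, h₁, sub_eq_zero]
  exact cls_eq_cls_of_isPullback HX h₂ (fst_constantPoint f ι x₁) (fst_constantPoint f ι x₀)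

end Kappa

end K3CCC

/-- Let `X` be a projective K3 surface over an algebraically closed field `k` with Beauville–Voisin
class `c`. Every rational curve `C ⊂ X` is a constant cycle curve of order one, for every choice of
the closed point `x₀` with `[x₀] = c` in the definition of `κ_C`. -/
theorem rational_curve_is_ccc_of_order_one (k : Type u) [Field k] [IsAlgClosed k]
    (X : Scheme.{u}) (f : X ⟶ Spec (.of k)) [K3CCC.IsProjectiveK3 f]
    (c : K3CCC.CH₀ X) (hc : K3CCC.IsBeauvilleVoisinClass f c)
    (C : Scheme.{u}) (i : C ⟶ X) (hC : K3CCC.IsRationalCurve f i)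
    (x₀ : closedPoints X) (hx₀ : K3CCC.CH₀.cls x₀ = c) :
    K3CCC.IsConstantCycleCurve f i x₀ ∧ K3CCC.cccOrder f i x₀ = 1 := by
  have := hC.isCurve.isClosedImmersion
  have := hC.isCurve.nonempty
  have : QuasiSeparatedSpace C :=
    (quasiSeparated_iff_quasiSeparatedSpace (i ≫ f)).1 inferInstance
  have key (W : Scheme.{u}) (j : W ⟶ C) (hj : K3CCC.IsIntegralComponent j) :
      haveI := hj.isIntegral
      K3CCC.kappa f (j ≫ i) x₀ = 0 := by
    have := hj.isIntegral
    have := hj.isClosedImmersion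
    have hW : K3CCC.HasNormalizationP1 ((j ≫ i) ≫ f) := by
      obtain ⟨e, he⟩ := hC.normalization W j hj
      exact ⟨e, he.trans (by rw [Category.assoc])⟩
    refine K3CCC.kappa_eq_zero f (j ≫ i) hW x₀ ?_
    rintro x ⟨y, hy⟩
    rw [hx₀]
    exact hc.eq_of_rational C i hC x ⟨j y, hy⟩
  refine ⟨fun W j hj => ?_, ?_⟩
  · have := hj.isIntegral
    rw [key W j hj]
    exact IsOfFinAddOrder.zero
  · obtain ⟨W, j, hj⟩ := K3CCC.exists_isIntegralComponent C
    have h : {n | ∃ (W : Scheme.{u}) (j : W ⟶ C) (hj : K3CCC.IsIntegralComponent j),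
        haveI := hj.isIntegral
        n = addOrderOf (K3CCC.kappa f (j ≫ i) x₀)} = {1} := by
      refine Set.eq_singleton_iff_unique_mem.2 ⟨⟨W, j, hj, ?_⟩, ?_⟩
      · rw [key W j hj, addOrderOf_zero]
      · rintro n ⟨W, j, hj, rfl⟩
        rw [key W j hj, addOrderOf_zero]
    rw [K3CCC.cccOrder, h, csSup_singleton]
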